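/- Let d > 3 be an integer, ε ≠ 0 and τ ≥ 0. Let V : ℝ^d → ℝ be nonnegative, continuously differentiable away from the origin, with γ·V(x) + |x|·∂_rV(x) ≤ (1−η)(d−1)(d−3)/(2|x|²) for some γ > 0, η > 0 and all x ≠ 0. If u is a classical solution of −Δu + V u ± iεu − τu = f with u, ∇u ∈ L²(ℝ^d) and f ∈ L²(ℝ^d), then ‖∇u‖²_X + τ‖u‖²_X + ∫_{ℝ^d} (V(x)/|x|)|u(x)|² dx + sup_{R>0} R^{−3}∫_{B(0,R)} |u(x)|² dx + ‖V^{1/2}u‖²_X + (d−3)∫_{ℝ^d} |u(x)|²/|x|³ dx ≤ C‖f‖²_{X*} + (1/2)|ε|·‖u‖²_X, with C depending only on d, γ, η. -/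

import Mathlib

/-!
Write `u = a + i b`; the equation becomes a real system (`Sol`), and everything below is done for
the real functions `a`, `b`.

**Morawetz multiplier.** Testing the equation against
`k(x) (x·∇u + (d-1)/2 u)` with `k(x) = |x|⁻¹ + δ (R² + |x|²)^(-1/2)` gives a pointwise divergence
identity away from the origin (`div_flux`). The first weight, together with the repulsivity
hypothesis on `V`, produces `γ V |u|²/|x|` and `η |u|²/|x|³`; the second weight, for `δ` small
compared with `γ` and `η`, adds a multiple of
`R² (R² + |x|²)^(-3/2) (|∇u|² + τ |u|²)`, which on `B(0, R)` is comparable with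
`R⁻¹ (|∇u|² + τ |u|²)` (`morawetz_pos`, `weight_lower`). Integrating requires cutting off both at
infinity and at the origin, where `V` may be singular: the logarithmic cutoffs of `exists_cutoff`
make the boundary terms vanish as soon as `flux / |x|` is integrable (`divergence_ineq`), and this
holds because `|x|⁻³` is locally integrable for `d > 3` and because near the origin `V |u|²` can
be read off from the equation (`int_Vw1`). Taking the supremum over `R`, the four main terms
`‖∇u‖²_X`, `τ ‖u‖²_X`, `∫ V |u|²/|x|` and `∫ |u|²/|x|³` are each bounded by a constant times
`Q = 2 ∫ (|f| |∇u| + (d-1)/2 |f| |u|/|x| + |ε| |u| |∇u|)` (`main_terms`); the remaining two terms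
of the claim are dominated by these.

**Estimate of `Q`.** The last summand is not small, but by Cauchy–Schwarz its square is at most
`(|ε| ∫ |u|²) (|ε| ∫ |∇u|²)`, and the imaginary and real parts of the pairing of the equation with
`u` give `|ε| ∫ |u|² ≤ ∫ |f| |u|` (`charge_le`) and `∫ |∇u|² ≤ τ ∫ |u|² + ∫ |f| |u|`
(`energy_le`). Hence it is bounded by `‖f‖_{X*}` times the square root of
`2 (τ ‖u‖²_X + |ε| ‖u‖²_X)` (`cross_le`). The other two summands are bounded by the duality of the
Morrey–Campanato norm with `X*` on dyadic shells (`lintegral_mul_le_nXstar`). Young's inequality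
then absorbs all main terms, which are finite a priori, and leaves `|ε| ‖u‖²_X` with the factor
`1/2` (`absorb`).
-/

noncomputable section
open MeasureTheory Metric Set ENNReal

abbrev Ed (d : ℕ) := EuclideanSpace ℝ (Fin d)

/-- partial derivative of a complex valued function -/
def pd {d : ℕ} (u : Ed d → ℂ) (i : Fin d) (x : Ed d) : ℂ :=
  fderiv ℝ u x (EuclideanSpace.single i 1)

/-- Laplacian of a complex valued function -/
def lap {d : ℕ} (u : Ed d → ℂ) (x : Ed d) : ℂ :=
  ∑ i, fderiv ℝ (pd u i) x (EuclideanSpace.single i 1)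

/-- squared norm of the gradient, as an extended nonnegative real -/
def gradSq {d : ℕ} (u : Ed d → ℂ) (x : Ed d) : ℝ≥0∞ :=
  ∑ i, (‖pd u i x‖₊ : ℝ≥0∞) ^ 2

/-- |u(x)|² as an extended nonnegative real -/
def usq {d : ℕ} (u : Ed d → ℂ) (x : Ed d) : ℝ≥0∞ := (‖u x‖₊ : ℝ≥0∞) ^ 2

/-- radial derivative ∂_r V (x) = (x/|x|)·∇V(x) -/
def radialDeriv {d : ℕ} (V : Ed d → ℝ) (x : Ed d) : ℝ :=
  fderiv ℝ V x x / ‖x‖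

/-- Morrey–Campanato type quantity sup_{R>0} (1/R) ∫_{B(0,R)} g -/
def nX2 {d : ℕ} (g : Ed d → ℝ≥0∞) : ℝ≥0∞ :=
  ⨆ (R : ℝ) (_ : 0 < R), (ENNReal.ofReal R)⁻¹ * ∫⁻ x in ball (0 : Ed d) R, g x

/-- dyadic shell C_j -/
def shell (d : ℕ) (j : ℤ) : Set (Ed d) := {x | (2:ℝ)^j < ‖x‖ ∧ ‖x‖ ≤ (2:ℝ)^(j+1)}

/-- the dual norm ‖f‖_{X*} applied to g = |f|² -/
def nXstar {d : ℕ} (g : Ed d → ℝ≥0∞) : ℝ≥0∞ :=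
  ∑' j : ℤ, (ENNReal.ofReal ((2:ℝ)^(j+1)) * ∫⁻ x in shell d j, g x) ^ (1/2 : ℝ)

/-- the index j₀ with 2^{j₀} < ρ ≤ 2^{j₀+1} -/
def jIdx (ρ : ℝ) : ℤ := ⌈Real.logb 2 ρ⌉ - 1

/-- sup_{R ≥ ρ} (1/R)∫_{B(0,R)} g -/
def nX2r {d : ℕ} (ρ : ℝ) (g : Ed d → ℝ≥0∞) : ℝ≥0∞ :=
  ⨆ (R : ℝ) (_ : ρ ≤ R), (ENNReal.ofReal R)⁻¹ * ∫⁻ x in ball (0 : Ed d) R, g x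

/-- the dual norm ‖f‖_{X*_ρ} applied to g = |f|² -/
def nXstarr {d : ℕ} (ρ : ℝ) (g : Ed d → ℝ≥0∞) : ℝ≥0∞ :=
  (∑' j : {j : ℤ // jIdx ρ ≤ j},
    (ENNReal.ofReal ((2:ℝ)^((j:ℤ)+1)) * ∫⁻ x in shell d (j:ℤ), g x) ^ (1/2 : ℝ))
  + (ENNReal.ofReal ρ * ∫⁻ x in ball (0 : Ed d) ρ, g x) ^ (1/2 : ℝ)

/-- integral of g over the sphere of radius R w.r.t. (d-1)-dimensional Hausdorff measure -/
def sphInt {d : ℕ} (R : ℝ) (g : Ed d → ℝ≥0∞) : ℝ≥0∞ :=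
  ∫⁻ x in Metric.sphere (0 : Ed d) R, g x ∂(μH[(d:ℝ) - 1])

open Filter Topology

/-! ### Cutoffs and a divergence inequality -/

/-- The `i`-th coordinate vector. -/
abbrev ee {d : ℕ} (i : Fin d) : Ed d := EuclideanSpace.single i (1:ℝ)

/-- Logarithmic cutoffs `κ = b (log |x|² / (n + 1))`, with `b` a bump function on the line: they
vanish near the origin and near infinity, exhaust the punctured space as `n → ∞`, and
`|x| |∂ᵢκ|` is `O(1 / n)`. -/
lemma exists_cutoff (d : ℕ) : ∃ M : ℝ, ∀ n : ℕ, ∃ κ : Ed d → ℝ, ContDiff ℝ 1 κ ∧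
    HasCompactSupport κ ∧ (0 ∉ tsupport κ) ∧ (∀ x, 0 ≤ κ x ∧ κ x ≤ 1) ∧
    (∀ x, x ≠ 0 → |Real.log (‖x‖^2)| ≤ n + 1 → κ x = 1) ∧
    (∀ x i, |fderiv ℝ κ x (ee i)| * ‖x‖ ≤ M / (n+1)) := by
  let b : ContDiffBump (0:ℝ) := ⟨1, 2, by norm_num, by norm_num⟩
  have hb1 : ContDiff ℝ 1 b := b.contDiff
  obtain ⟨M, hM⟩ := (hb1.continuous_deriv le_rfl).bounded_above_of_compact_support
    b.hasCompactSupport.deriv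
  refine ⟨2 * M, fun n => ?_⟩
  have hn : (0:ℝ) < n + 1 := by positivity
  let κ : Ed d → ℝ := fun x => if x = 0 then 0 else b (Real.log (‖x‖^2) / (n+1))
  let K : Set (Ed d) := {x | Real.exp (-(2*(n+1))) ≤ ‖x‖^2 ∧ ‖x‖^2 ≤ Real.exp (2*(n+1))}
  have hcn : Continuous fun x : Ed d => ‖x‖^2 := by fun_prop
  have hKc : IsClosed K :=
    IsClosed.inter (isClosed_le continuous_const hcn) (isClosed_le hcn continuous_const)
  have hK0 : (0 : Ed d) ∉ K := by
    intro h
    have := h.1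
    simp only [norm_zero] at this
    have := Real.exp_pos (-(2*((n:ℝ)+1)))
    norm_num at *
    linarith
  have hKb : K ⊆ closedBall 0 (Real.exp (2*(n+1)) + 1) := by
    intro x hx
    have := hx.2
    simp only [mem_closedBall, dist_zero_right]
    nlinarith [norm_nonneg x]
  have hKcomp : IsCompact K := (isCompact_closedBall _ _).of_isClosed_subset hKc hKb
  have hsupp : Function.support κ ⊆ K := by
    intro x hx
    simp only [Function.mem_support, κ] at hx
    by_cases h0 : x = 0
    · simp [h0] at hx
    rw [if_neg h0] at hx
    have h1 : Real.log (‖x‖^2) / (n+1) ∈ Function.support b := hx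
    rw [b.support_eq, mem_ball, dist_zero_right, Real.norm_eq_abs, abs_lt] at h1
    have h2 : (0:ℝ) < ‖x‖^2 := by positivity
    change -2 < _ ∧ _ < (2:ℝ) at h1
    rw [lt_div_iff₀ hn, div_lt_iff₀ hn] at h1
    constructor
    · rw [← Real.le_log_iff_exp_le h2]; linarith
    · rw [← Real.log_le_iff_le_exp h2]; linarith
  have hts : tsupport κ ⊆ K := closure_minimal hsupp hKc
  have hloc : ∀ x : Ed d, x ≠ 0 → κ =ᶠ[𝓝 x] fun x => b (Real.log (‖x‖^2) / (n+1)) := by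
    intro x hx
    filter_upwards [isOpen_ne.mem_nhds hx] with y hy
    simp [κ, show y ≠ 0 from hy]
  have hloc0 : κ =ᶠ[𝓝 0] fun _ => 0 := by
    filter_upwards [hKc.isOpen_compl.mem_nhds hK0] with y hy
    by_contra h
    exact hy (hsupp h)
  refine ⟨κ, ?_, ?_, fun h => hK0 (hts h), ?_, ?_, ?_⟩
  · rw [contDiff_iff_contDiffAt]
    intro x
    by_cases hx : x = 0
    · subst hx
      exact contDiffAt_const.congr_of_eventuallyEq hloc0
    · refine ContDiffAt.congr_of_eventuallyEq ?_ (hloc x hx)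
      refine hb1.contDiffAt.comp x ?_
      refine ContDiffAt.div_const (ContDiffAt.log ?_ (by positivity)) _
      exact (contDiff_norm_sq ℝ).contDiffAt
  · exact hKcomp.of_isClosed_subset (isClosed_tsupport _) hts
  · intro x
    by_cases hx : x = 0
    · simp [κ, hx]
    · simp only [κ, hx, if_false]
      exact ⟨b.nonneg, b.le_one⟩
  · intro x hx h
    simp only [κ, hx, if_false]
    apply b.one_of_mem_closedBall
    rw [mem_closedBall, dist_zero_right, Real.norm_eq_abs, abs_div, abs_of_pos hn, div_le_iff₀ hn]
    change _ ≤ (1:ℝ) * _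
    linarith
  · intro x i
    by_cases hx : x = 0
    · subst hx
      have hM0 : 0 ≤ M := (norm_nonneg _).trans (hM 0)
      simp; positivity
    · have h1 : HasFDerivAt (fun x : Ed d => Real.log (‖x‖^2) / ((n:ℝ)+1)) _ x :=
        (((hasStrictFDerivAt_norm_sq x).hasFDerivAt.log (by positivity)).mul_const ((n:ℝ)+1)⁻¹)
      have h2 := ((hb1.differentiable one_ne_zero) _).hasDerivAt.comp_hasFDerivAt x h1
      have h3 := (h2.congr_of_eventuallyEq (hloc x hx)).fderiv
      rw [h3]
      have hxp : 0 < ‖x‖ := norm_pos_iff.2 hx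
      have h4 : |x i| ≤ ‖x‖ := by
        simpa using EuclideanSpace.norm_eq x ▸ PiLp.norm_apply_le x i
      have h5 := hM (Real.log (‖x‖^2) / ((n:ℝ)+1))
      rw [Real.norm_eq_abs] at h5
      have hM0 : 0 ≤ M := (abs_nonneg _).trans h5
      have hin : inner ℝ x (ee i) = x i := by simp [ee, EuclideanSpace.inner_single_right]
      simp [abs_mul, abs_inv, hin, -Real.log_pow]
      rw [abs_of_pos hn]
      calc _ = |deriv b (Real.log (‖x‖ ^ 2) / (↑n + 1))| * (2 * (|x i| / ‖x‖)) / (n+1) := by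
            push_cast
            field_simp
        _ ≤ M * (2 * 1) / (n+1) := by
            have : |x i| / ‖x‖ ≤ 1 := by rw [div_le_one hxp]; exact h4
            gcongr
        _ = _ := by ring

/-- Divergence theorem on the punctured space, as an inequality: if `div P = A - B` away from the
origin with `A ≥ 0` and `P / |x|`, `B` integrable, then `∫ A ≤ ∫ B`. Against the cutoffs `κₙ` of
`exists_cutoff` the boundary term is `O(1 / n) ∫ |P| / |x|`; Fatou's lemma gives the limit. -/
lemma divergence_ineq {d : ℕ} (hd : 0 < d) (P : Fin d → Ed d → ℝ)
    (hP : ∀ i, ContDiffOn ℝ 1 (P i) {(0 : Ed d)}ᶜ)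
    (hPint : ∀ i, Integrable (fun x => P i x / ‖x‖)) (A B : Ed d → ℝ)
    (hA : ∀ x, x ≠ 0 → 0 ≤ A x) (hB : Integrable B)
    (hdiv : ∀ x, x ≠ 0 → ∑ i, fderiv ℝ (P i) x (ee i) = A x - B x) :
    ∫⁻ x, ENNReal.ofReal (A x) ≤ ENNReal.ofReal (∫ x, B x) := by
  have : Nonempty (Fin d) := ⟨⟨0, hd⟩⟩
  have hae : ∀ᵐ x : Ed d, x ≠ 0 := by
    rw [ae_iff]; simp
  obtain ⟨M, hM⟩ := exists_cutoff d
  choose κ hκ1 hκc hκ0 hκb hκe hκd using hM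
  have hopen : IsOpen ({(0 : Ed d)}ᶜ) := isOpen_compl_singleton
  have hPd : ∀ i, ContinuousOn (fun x => fderiv ℝ (P i) x (ee i)) {(0 : Ed d)}ᶜ := fun i =>
    ((hP i).continuousOn_fderiv_of_isOpen hopen le_rfl).clm_apply continuousOn_const
  -- products of a cutoff with a function continuous off the origin
  have hcont : ∀ (n : ℕ) (ζ g : Ed d → ℝ), Continuous ζ → tsupport ζ ⊆ tsupport (κ n) →
      ContinuousOn g {(0 : Ed d)}ᶜ → Integrable (fun x => ζ x * g x) := by
    intro n ζ g hζ hs hg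
    have hc : HasCompactSupport ζ := (hκc n).of_isClosed_subset (isClosed_tsupport _) hs
    refine Continuous.integrable_of_hasCompactSupport ?_ hc.mul_right
    rw [continuous_iff_continuousAt]
    intro x
    by_cases hx : x = 0
    · have : x ∉ tsupport ζ := fun h => hκ0 n (hx ▸ hs h)
      have h0 : (fun x => ζ x * g x) =ᶠ[𝓝 x] fun _ => 0 := by
        filter_upwards [notMem_tsupport_iff_eventuallyEq.1 this] with y hy
        simp [hy]
      exact continuousAt_const.congr h0.symm
    · exact hζ.continuousAt.mul (hg.continuousAt (hopen.mem_nhds hx))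
  have hκd_cont : ∀ n i, Continuous (fun x => fderiv ℝ (κ n) x (ee i)) := fun n i =>
    ((hκ1 n).continuous_fderiv one_ne_zero).clm_apply continuous_const
  have hκd_supp : ∀ n i, tsupport (fun x => fderiv ℝ (κ n) x (ee i)) ⊆ tsupport (κ n) :=
    fun n i => tsupport_fderiv_apply_subset ℝ _
  have hparts : ∀ n i, ∫ x, κ n x * fderiv ℝ (P i) x (ee i) =
      - ∫ x, fderiv ℝ (κ n) x (ee i) * P i x := by
    intro n i
    refine integral_mul_fderiv_eq_neg_fderiv_mul_of_integrable ?_ ?_ ?_ ?_ ?_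
    · exact hcont n _ _ (hκd_cont n i) (hκd_supp n i) (hP i).continuousOn
    · exact hcont n _ _ (hκ1 n).continuous le_rfl (hPd i)
    · exact hcont n _ _ (hκ1 n).continuous le_rfl (hP i).continuousOn
    · intro x _
      exact (hκ1 n).differentiable one_ne_zero x
    · intro x hx
      have hx0 : x ≠ 0 := fun h => hκ0 n (h ▸ hx)
      exact ((hP i).contDiffAt (hopen.mem_nhds hx0)).differentiableAt one_ne_zero
  have hκB : ∀ n, Integrable (fun x => κ n x * B x) := fun n =>
    hB.bdd_mul (c := 1) (hκ1 n).continuous.aestronglyMeasurable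
      (ae_of_all _ fun x => by rw [Real.norm_eq_abs, abs_of_nonneg (hκb n x).1]; exact (hκb n x).2)
  have hκdiv : ∀ n, Integrable (fun x => ∑ i, κ n x * fderiv ℝ (P i) x (ee i)) := fun n =>
    integrable_finsetSum _ fun i _ => hcont n _ _ (hκ1 n).continuous le_rfl (hPd i)
  have hκA_eq : ∀ n, (fun x => κ n x * A x) =ᵐ[volume]
      fun x => (∑ i, κ n x * fderiv ℝ (P i) x (ee i)) + κ n x * B x := by
    intro n
    filter_upwards [hae] with x hx
    rw [← Finset.mul_sum, hdiv x hx]; ring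
  have hκA : ∀ n, Integrable (fun x => κ n x * A x) := fun n =>
    ((hκdiv n).add (hκB n)).congr (hκA_eq n).symm
  let J : ℝ := ∑ i, ∫ x, |P i x / ‖x‖|
  have hbound : ∀ n, ∫ x, κ n x * A x ≤ (∫ x, κ n x * B x) + M / (n+1) * J := by
    intro n
    rw [integral_congr_ae (hκA_eq n), integral_add (hκdiv n) (hκB n),
      integral_finsetSum _ fun i _ => hcont n _ _ (hκ1 n).continuous le_rfl (hPd i), add_comm]
    refine add_le_add_right ?_ _
    rw [Finset.mul_sum]
    refine Finset.sum_le_sum fun i _ => ?_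
    rw [hparts, ← integral_neg, ← integral_const_mul]
    refine integral_mono_ae (hcont n _ _ (hκd_cont n i) (hκd_supp n i) (hP i).continuousOn).neg
      ((hPint i).abs.const_mul _) ?_
    filter_upwards [hae] with x hx
    have hxp : 0 < ‖x‖ := norm_pos_iff.2 hx
    calc -(fderiv ℝ (κ n) x (ee i) * P i x) ≤ |fderiv ℝ (κ n) x (ee i) * P i x| := neg_le_abs _
      _ = (|fderiv ℝ (κ n) x (ee i)| * ‖x‖) * |P i x / ‖x‖| := by
          rw [abs_mul, abs_div, abs_of_pos hxp]; field_simp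
      _ ≤ _ := mul_le_mul_of_nonneg_right (hκd n x i) (abs_nonneg _)
  have hκlim : ∀ x : Ed d, x ≠ 0 → ∀ᶠ n in atTop, κ n x = 1 := by
    intro x hx
    filter_upwards [eventually_ge_atTop ⌈|Real.log (‖x‖^2)|⌉₊] with n hn
    refine hκe n x hx ?_
    have : |Real.log (‖x‖^2)| ≤ n := (Nat.le_ceil _).trans (by exact_mod_cast hn)
    linarith
  have hlimB : Tendsto (fun n => ∫ x, κ n x * B x) atTop (𝓝 (∫ x, B x)) := by
    refine tendsto_integral_of_dominated_convergence (fun x => |B x|)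
      (fun n => (hκB n).aestronglyMeasurable) hB.abs (fun n => ae_of_all _ fun x => ?_) ?_
    · rw [Real.norm_eq_abs, abs_mul, abs_of_nonneg (hκb n x).1]
      exact mul_le_of_le_one_left (abs_nonneg _) (hκb n x).2
    · filter_upwards [hae] with x hx
      refine tendsto_const_nhds.congr' ?_
      filter_upwards [hκlim x hx] with n hn
      simp [hn]
  have hlimR : Tendsto (fun n : ℕ => ENNReal.ofReal ((∫ x, κ n x * B x) + M / (n+1) * J)) atTop
      (𝓝 (ENNReal.ofReal (∫ x, B x))) := by
    refine ENNReal.tendsto_ofReal ?_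
    have h1 : Tendsto (fun n : ℕ => M / ((n:ℝ)+1)) atTop (𝓝 0) := by
      simpa [div_eq_mul_inv] using
        (tendsto_one_div_add_atTop_nhds_zero_nat (𝕜 := ℝ)).const_mul M
    simpa using hlimB.add (h1.mul_const J)
  calc ∫⁻ x, ENNReal.ofReal (A x)
      = ∫⁻ x, liminf (fun n => ENNReal.ofReal (κ n x * A x)) atTop := by
        refine lintegral_congr_ae ?_
        filter_upwards [hae] with x hx
        refine (Tendsto.liminf_eq (tendsto_const_nhds.congr' ?_)).symm
        filter_upwards [hκlim x hx] with n hn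
        simp [hn]
    _ ≤ liminf (fun n => ∫⁻ x, ENNReal.ofReal (κ n x * A x)) atTop :=
        lintegral_liminf_le' fun n => (hκA n).aestronglyMeasurable.aemeasurable.ennreal_ofReal
    _ ≤ liminf (fun n : ℕ => ENNReal.ofReal ((∫ x, κ n x * B x) + M / (n+1) * J)) atTop := by
        refine liminf_le_liminf (Eventually.of_forall fun n => ?_)
        change ∫⁻ x, ENNReal.ofReal (κ n x * A x) ≤ _
        rw [← ofReal_integral_eq_lintegral_ofReal (hκA n)]
        · exact ENNReal.ofReal_le_ofReal (hbound n)
        · filter_upwards [hae] with x hx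
          exact mul_nonneg (hκb n x).1 (hA x hx)
    _ = ENNReal.ofReal (∫ x, B x) := hlimR.liminf_eq

/-! ### The Morawetz divergence identity -/

/-- The `i`-th partial derivative of a real valued function. -/
def pr {d : ℕ} (a : Ed d → ℝ) (i : Fin d) (x : Ed d) : ℝ := fderiv ℝ a x (ee i)

/-- The Euler operator `x · ∇a`. -/
def eul {d : ℕ} (a : Ed d → ℝ) (x : Ed d) : ℝ := ∑ j, x j * pr a j x

/-- `|∇a|²`. -/
def gr2 {d : ℕ} (a : Ed d → ℝ) (x : Ed d) : ℝ := ∑ j, pr a j x ^ 2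

/-- The Laplacian of a real valued function. -/
def lapR {d : ℕ} (a : Ed d → ℝ) (x : Ed d) : ℝ := ∑ i, pr (pr a i) i x

/-- The radial weights `|x|⁻ⁿ + δ (R² + |x|²)^(-n/2)`. -/
def kern {d : ℕ} (δ R : ℝ) (n : ℕ) (x : Ed d) : ℝ :=
  (‖x‖ ^ n)⁻¹ + δ * (√(R ^ 2 + ‖x‖ ^ 2) ^ n)⁻¹

/-- The Morawetz flux attached to a real valued function `a`, with multiplier
`kern 1 * (x · ∇a + (d - 1) / 2 * a)`. -/
def flux {d : ℕ} (δ R τ : ℝ) (V a : Ed d → ℝ) (i : Fin d) (x : Ed d) : ℝ :=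
  kern δ R 1 x * pr a i x * (eul a x + ((d:ℝ) - 1) / 2 * a x)
    - 1 / 2 * gr2 a x * (kern δ R 1 x * x i)
    - 1 / 2 * (V x - τ) * a x ^ 2 * (kern δ R 1 x * x i)
    + 1 / 4 * ((d:ℝ) - 1) * (kern δ R 3 x * x i) * a x ^ 2

section
variable {d : ℕ}

lemma hasFDerivAt_sqrt_pow_inv (ρ : ℝ) (n : ℕ) {x : Ed d} (hx : x ≠ 0) :
    HasFDerivAt (fun y : Ed d => (√(ρ ^ 2 + ‖y‖ ^ 2) ^ n)⁻¹)
      ((-(n:ℝ) * (√(ρ ^ 2 + ‖x‖ ^ 2) ^ (n + 2))⁻¹) • innerSL ℝ x) x := by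
  have hxp : 0 < ‖x‖ := norm_pos_iff.2 hx
  have hpos : 0 < ρ ^ 2 + ‖x‖ ^ 2 := by positivity
  have h1 : HasFDerivAt (fun y : Ed d => ρ ^ 2 + ‖y‖ ^ 2) _ x :=
    (hasStrictFDerivAt_norm_sq x).hasFDerivAt.const_add (ρ ^ 2)
  have hs : 0 < √(ρ ^ 2 + ‖x‖ ^ 2) := Real.sqrt_pos.2 hpos
  have h2 : HasDerivAt (fun t : ℝ => (√t ^ n)⁻¹) _ (ρ ^ 2 + ‖x‖ ^ 2) :=
    ((Real.hasDerivAt_sqrt hpos.ne').fun_pow n).fun_inv (pow_pos hs n).ne'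
  have h3 := h2.comp_hasFDerivAt x h1
  refine h3.congr_fderiv ?_
  ext v
  simp only [smul_apply, smul_eq_mul, innerSL_apply_apply, nsmul_eq_mul]
  rcases n with _ | n
  · simp
  · simp
    field_simp
    ring

lemma hasFDerivAt_kern (δ R : ℝ) (n : ℕ) {x : Ed d} (hx : x ≠ 0) :
    HasFDerivAt (kern δ R n) ((-(n:ℝ) * kern δ R (n + 2) x) • innerSL ℝ x) x := by
  have h0 := hasFDerivAt_sqrt_pow_inv 0 n hx
  have h1 := (hasFDerivAt_sqrt_pow_inv R n hx).const_mul δ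
  have h2 := h0.add h1
  have e : kern δ R n = fun y : Ed d => (√((0:ℝ) ^ 2 + ‖y‖ ^ 2) ^ n)⁻¹ +
      δ * (√(R ^ 2 + ‖y‖ ^ 2) ^ n)⁻¹ := by
    funext y; simp [kern, Real.sqrt_sq]
  rw [e]
  refine h2.congr_fderiv ?_
  ext v
  simp [kern, Real.sqrt_sq]
  ring

lemma contDiffOn_kern (δ R : ℝ) (n : ℕ) : ContDiffOn ℝ 1 (kern δ R n : Ed d → ℝ) {(0 : Ed d)}ᶜ := by
  intro x hx
  have hx : x ≠ 0 := hx
  have hxp : 0 < ‖x‖ := norm_pos_iff.2 hx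
  have h1 : ContDiffAt ℝ 1 (fun y : Ed d => ‖y‖) x := contDiffAt_norm ℝ hx
  unfold kern
  refine ContDiffAt.contDiffWithinAt ?_
  refine ((h1.pow n).inv (by positivity)).add (contDiffAt_const.mul (ContDiffAt.inv
    (ContDiffAt.pow (ContDiffAt.sqrt (contDiffAt_const.add (h1.pow 2)) (by positivity)) n) ?_))
  have : 0 < √(R ^ 2 + ‖x‖ ^ 2) := Real.sqrt_pos.2 (by positivity)
  positivity

lemma contDiff_pr {n : ℕ} {a : Ed d → ℝ} (ha : ContDiff ℝ (n + 1) a) (i : Fin d) :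
    ContDiff ℝ n (pr a i) :=
  (ha.fderiv_right (m := n) le_rfl).clm_apply contDiff_const

lemma contDiff_coord (i : Fin d) : ContDiff ℝ 1 (fun x : Ed d => x i) :=
  (EuclideanSpace.proj (𝕜 := ℝ) i : Ed d →L[ℝ] ℝ).contDiff

lemma contDiff_eul {a : Ed d → ℝ} (ha : ContDiff ℝ 2 a) : ContDiff ℝ 1 (eul a) :=
  ContDiff.sum fun j _ => (contDiff_coord j).mul (contDiff_pr (n := 1) (by exact_mod_cast ha) j)

lemma contDiff_gr2 {a : Ed d → ℝ} (ha : ContDiff ℝ 2 a) : ContDiff ℝ 1 (gr2 a) :=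
  ContDiff.sum fun j _ => (contDiff_pr (n := 1) (by exact_mod_cast ha) j).pow 2

lemma contDiffOn_flux {δ R τ : ℝ} {V a : Ed d → ℝ} (hV : ContDiffOn ℝ 1 V {(0 : Ed d)}ᶜ)
    (ha : ContDiff ℝ 2 a) (i : Fin d) : ContDiffOn ℝ 1 (flux δ R τ V a i) {(0 : Ed d)}ᶜ := by
  have h1 := (contDiff_eul ha).contDiffOn (s := {(0 : Ed d)}ᶜ)
  have h2 := (contDiff_gr2 ha).contDiffOn (s := {(0 : Ed d)}ᶜ)
  have h3 := (contDiff_pr (n := 1) (by exact_mod_cast ha) i).contDiffOn (s := {(0 : Ed d)}ᶜ)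
  have h4 := (contDiff_coord i).contDiffOn (s := {(0 : Ed d)}ᶜ)
  have h5 := (ha.of_le (by norm_num : (1 : WithTop ℕ∞) ≤ 2)).contDiffOn (s := {(0 : Ed d)}ᶜ)
  have h6 := contDiffOn_kern (d := d) δ R 1
  have h7 := contDiffOn_kern (d := d) δ R 3
  unfold flux
  fun_prop

lemma pr_symm {a : Ed d → ℝ} (ha : ContDiff ℝ 2 a) (i j : Fin d) (x : Ed d) :
    pr (pr a i) j x = pr (pr a j) i x := by
  have hd : DifferentiableAt ℝ (fderiv ℝ a) x :=
    (ha.fderiv_right (m := 1) (by norm_num)).differentiable one_ne_zero x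
  have h : ∀ i j, pr (pr a i) j x = fderiv ℝ (fderiv ℝ a) x (ee j) (ee i) := by
    intro i j
    have := (hd.hasFDerivAt.clm_apply (hasFDerivAt_const (ee i) x)).fderiv
    unfold pr
    rw [this]; simp
  rw [h, h]
  exact (ha.contDiffAt.isSymmSndFDerivAt (by simp)) (ee j) (ee i)

lemma sum_coord_sq (x : Ed d) : ∑ i, x i ^ 2 = ‖x‖ ^ 2 := by
  rw [EuclideanSpace.norm_sq_eq]; simp

lemma eul_eq (a : Ed d → ℝ) (x : Ed d) : eul a x = fderiv ℝ a x x := by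
  have h : x = ∑ j, x j • ee j := by
    ext k; simp [ee, Finset.sum_apply, Pi.single_apply]
  unfold eul pr
  conv_rhs => arg 2; rw [h]
  simp

/-- Line derivative along `ee i`, for a differentiable function. -/
lemma hasDerivAt_line {a : Ed d → ℝ} {x : Ed d} (ha : DifferentiableAt ℝ a x) (i : Fin d) :
    HasDerivAt (fun t : ℝ => a (x + t • ee i)) (pr a i x) 0 :=
  ha.hasFDerivAt.hasLineDerivAt (ee i)

lemma pr_eq_of_line {a : Ed d → ℝ} {x : Ed d} (ha : DifferentiableAt ℝ a x) {i : Fin d} {c : ℝ}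
    (h : HasDerivAt (fun t : ℝ => a (x + t • ee i)) c 0) : pr a i x = c :=
  (hasDerivAt_line ha i).unique h

lemma pr_flux {δ R τ : ℝ} {V a : Ed d → ℝ} (hV : ContDiffOn ℝ 1 V {(0 : Ed d)}ᶜ)
    (ha : ContDiff ℝ 2 a) (i : Fin d) {x : Ed d} (hx : x ≠ 0) :
    pr (flux δ R τ V a i) i x =
      (-kern δ R 3 x * x i * pr a i x + kern δ R 1 x * pr (pr a i) i x) *
        (eul a x + ((d:ℝ) - 1) / 2 * a x)
      + kern δ R 1 x * pr a i x * (pr a i x + ∑ j, x j * pr (pr a j) i x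
          + ((d:ℝ) - 1) / 2 * pr a i x)
      - (∑ j, pr a j x * pr (pr a j) i x) * (kern δ R 1 x * x i)
      - 1 / 2 * gr2 a x * (-kern δ R 3 x * x i ^ 2 + kern δ R 1 x)
      - 1 / 2 * pr V i x * a x ^ 2 * (kern δ R 1 x * x i)
      - 1 / 2 * (V x - τ) * (2 * a x * pr a i x * (kern δ R 1 x * x i)
          + a x ^ 2 * (-kern δ R 3 x * x i ^ 2 + kern δ R 1 x))
      + 1 / 4 * ((d:ℝ) - 1) * ((-3 * kern δ R 5 x * x i ^ 2 + kern δ R 3 x) * a x ^ 2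
          + kern δ R 3 x * x i * (2 * a x * pr a i x)) := by
  have hnhds : ({(0 : Ed d)}ᶜ : Set (Ed d)) ∈ 𝓝 x := isOpen_compl_singleton.mem_nhds hx
  have hk : ∀ n, HasDerivAt (fun t : ℝ => kern δ R n (x + t • ee i))
      (-(n:ℝ) * kern δ R (n + 2) x * x i) 0 := by
    intro n
    have := (hasFDerivAt_kern δ R n hx).hasLineDerivAt (ee i)
    have hin : inner ℝ x (ee i) = x i := by simp [ee, EuclideanSpace.inner_single_right]
    simpa [HasLineDerivAt, hin] using this
  have hp : ∀ j, HasDerivAt (fun t : ℝ => pr a j (x + t • ee i)) (pr (pr a j) i x) 0 := fun j =>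
    hasDerivAt_line ((contDiff_pr (n := 1) (by exact_mod_cast ha) j).differentiable one_ne_zero x) i
  have hc : ∀ j, HasDerivAt (fun t : ℝ => (x + t • ee i) j) (if j = i then 1 else 0) 0 := by
    intro j
    have := ((hasDerivAt_id (0:ℝ)).mul_const ((ee i : Ed d) j)).const_add (x j)
    refine (this.congr_deriv ?_)
    simp [ee]
  have ha1 : HasDerivAt (fun t : ℝ => a (x + t • ee i)) (pr a i x) 0 :=
    hasDerivAt_line (ha.differentiable two_ne_zero x) i
  have hV1 : HasDerivAt (fun t : ℝ => V (x + t • ee i)) (pr V i x) 0 :=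
    hasDerivAt_line ((hV.contDiffAt hnhds).differentiableAt one_ne_zero) i
  have he : HasDerivAt (fun t : ℝ => eul a (x + t • ee i))
      (pr a i x + ∑ j, x j * pr (pr a j) i x) 0 := by
    have := HasDerivAt.fun_sum (u := Finset.univ) fun j _ => (hc j).mul (hp j)
    refine this.congr_deriv ?_
    simp [Finset.sum_add_distrib]
  have hg : HasDerivAt (fun t : ℝ => gr2 a (x + t • ee i))
      (2 * ∑ j, pr a j x * pr (pr a j) i x) 0 := by
    have := HasDerivAt.fun_sum (u := Finset.univ) fun j _ => (hp j).pow 2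
    refine this.congr_deriv ?_
    simp [Finset.mul_sum, mul_assoc]
  have hci := hc i
  rw [if_pos rfl] at hci
  have hki := (hk 1).mul hci
  have hki3 := (hk 3).mul hci
  have hfin := (((((hk 1).mul (hp i)).mul (he.add (ha1.const_mul (((d:ℝ) - 1) / 2)))).sub
    ((hg.const_mul (1/2)).mul hki)).sub
    ((((hV1.sub_const τ).const_mul (1/2)).mul (ha1.pow 2)).mul hki)).add
    ((hki3.const_mul (1 / 4 * ((d:ℝ) - 1))).mul (ha1.pow 2))
  refine pr_eq_of_line (((contDiffOn_flux hV ha i).contDiffAt hnhds).differentiableAt one_ne_zero) ?_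
  refine hfin.congr_deriv ?_
  simp
  ring

/-- The Morawetz identity: the divergence of the flux is the multiplier tested against
`Δa - (V - τ) a`, plus terms quadratic in `a` and `∇a`. Symmetry of the second derivatives cancels
the second order part of `∇(|∇a|²)`. -/
lemma div_flux {δ R τ : ℝ} {V a : Ed d → ℝ} (hV : ContDiffOn ℝ 1 V {(0 : Ed d)}ᶜ)
    (ha : ContDiff ℝ 2 a) {x : Ed d} (hx : x ≠ 0) :
    ∑ i, pr (flux δ R τ V a i) i x =
      kern δ R 1 x * (lapR a x - (V x - τ) * a x) * (eul a x + ((d:ℝ) - 1) / 2 * a x)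
      - kern δ R 3 x * eul a x ^ 2
      + 1 / 2 * gr2 a x * (kern δ R 1 x + kern δ R 3 x * ‖x‖ ^ 2)
      - 1 / 2 * (kern δ R 1 x - kern δ R 3 x * ‖x‖ ^ 2) * (V x - τ) * a x ^ 2
      - 1 / 2 * eul V x * kern δ R 1 x * a x ^ 2
      + 1 / 4 * ((d:ℝ) - 1) * (d * kern δ R 3 x - 3 * kern δ R 5 x * ‖x‖ ^ 2) * a x ^ 2 := by
  have hsw : ∑ i, pr a i x * ∑ j, x j * pr (pr a j) i x =
      ∑ i, (∑ j, pr a j x * pr (pr a j) i x) * x i := by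
    simp_rw [Finset.mul_sum, Finset.sum_mul]
    rw [Finset.sum_comm]
    refine Finset.sum_congr rfl fun i _ => Finset.sum_congr rfl fun j _ => ?_
    rw [pr_symm ha i j]; ring
  have key : ∀ i, pr (flux δ R τ V a i) i x =
      (eul a x + ((d:ℝ) - 1) / 2 * a x) * (-kern δ R 3 x) * (x i * pr a i x)
      + (eul a x + ((d:ℝ) - 1) / 2 * a x) * kern δ R 1 x * pr (pr a i) i x
      + kern δ R 1 x * (1 + ((d:ℝ) - 1) / 2) * (pr a i x ^ 2)
      + kern δ R 1 x * (pr a i x * ∑ j, x j * pr (pr a j) i x)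
      - kern δ R 1 x * ((∑ j, pr a j x * pr (pr a j) i x) * x i)
      + (1 / 2 * gr2 a x * kern δ R 3 x + 1 / 2 * (V x - τ) * a x ^ 2 * kern δ R 3 x
          - 3 / 4 * ((d:ℝ) - 1) * kern δ R 5 x * a x ^ 2) * (x i ^ 2)
      + (- 1 / 2 * gr2 a x * kern δ R 1 x - 1 / 2 * (V x - τ) * a x ^ 2 * kern δ R 1 x
          + 1 / 4 * ((d:ℝ) - 1) * kern δ R 3 x * a x ^ 2)
      - 1 / 2 * a x ^ 2 * kern δ R 1 x * (x i * pr V i x)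
      + (- (V x - τ) * a x * kern δ R 1 x + 1 / 2 * ((d:ℝ) - 1) * kern δ R 3 x * a x)
          * (x i * pr a i x) := by
    intro i
    rw [pr_flux hV ha i hx]; ring
  simp_rw [key]
  simp only [Finset.sum_add_distrib, Finset.sum_sub_distrib, ← Finset.mul_sum, Finset.sum_const,
    Finset.card_univ, Fintype.card_fin, nsmul_eq_mul, hsw, sum_coord_sq]
  rw [show ∑ i, x i * pr a i x = eul a x from rfl, show ∑ i, x i * pr V i x = eul V x from rfl,
    show ∑ i, pr a i x ^ 2 = gr2 a x from rfl, show ∑ i, pr (pr a i) i x = lapR a x from rfl]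
  ring
end

/-! ### Pointwise positivity and integrability near the origin -/

section
variable {d : ℕ}

/-- The properties of `q = (R² + r²)^(-1/2)` used in `morawetz_pos`. -/
lemma weight_facts {R r : ℝ} (hr : 0 < r) :
    0 < (√(R ^ 2 + r ^ 2))⁻¹ ∧ (√(R ^ 2 + r ^ 2))⁻¹ ≤ r⁻¹ ∧
      R ^ 2 * (√(R ^ 2 + r ^ 2))⁻¹ ^ 2 + r ^ 2 * (√(R ^ 2 + r ^ 2))⁻¹ ^ 2 = 1 := by
  have hpos : 0 < R ^ 2 + r ^ 2 := by positivity
  have hs : 0 < √(R ^ 2 + r ^ 2) := Real.sqrt_pos.2 hpos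
  refine ⟨by positivity, ?_, ?_⟩
  · apply inv_anti₀ hr
    apply Real.le_sqrt_of_sq_le
    nlinarith [sq_nonneg R]
  · rw [inv_pow, Real.sq_sqrt hpos.le]
    field_simp

/-- Positivity of the quadratic terms in `div_flux`. Here `D` is the dimension, `r = |x|`,
`p = 1 / |x|`, `q = (R² + |x|²)^(-1/2)`, `v = V`, `W = x · ∇V`, `w = |u|²`, `g = |∇u|²` and
`e = |x · ∇u|²`. The repulsivity hypothesis `hW` makes the contribution of the weight `p` positive;
the smallness of `δ` lets it absorb the terms of the wrong sign coming from `δ q`. -/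
lemma morawetz_pos {D γ η δ R r τ v w g e W p q : ℝ} (hD : 3 < D) (hγ : 0 < γ) (hη : 0 < η)
    (hδ : 0 < δ) (hδγ : δ ≤ γ / 2) (hδη : δ ≤ η / 2) (hr : 0 < r)
    (hv : 0 ≤ v) (hw : 0 ≤ w) (he : e ≤ r ^ 2 * g)
    (hp : p = r⁻¹) (hq : 0 < q) (hqp : q ≤ p) (hRq : R ^ 2 * q ^ 2 + r ^ 2 * q ^ 2 = 1)
    (hW : γ * v + W ≤ (1 - η) * (D - 1) * (D - 3) / (2 * r ^ 2)) :
    1 / 2 * δ * (R ^ 2 * q ^ 3) * (g + τ * w) + γ / 4 * (v * w * p)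
        + η * (D - 1) * (D - 3) / 8 * (w * p ^ 3) ≤
      - (p ^ 3 + δ * q ^ 3) * e
      + 1 / 2 * g * ((p ^ 1 + δ * q ^ 1) + (p ^ 3 + δ * q ^ 3) * r ^ 2)
      - 1 / 2 * ((p ^ 1 + δ * q ^ 1) - (p ^ 3 + δ * q ^ 3) * r ^ 2) * (v - τ) * w
      - 1 / 2 * W * (p ^ 1 + δ * q ^ 1) * w
      + 1 / 4 * (D - 1) * (D * (p ^ 3 + δ * q ^ 3) - 3 * (p ^ 5 + δ * q ^ 5) * r ^ 2) * w := by
  have hpp : 0 < p := by rw [hp]; positivity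
  have hpr : p * r = 1 := by rw [hp]; field_simp
  have hW' : γ * v + W ≤ (1 - η) * ((D - 1) * (D - 3)) / 2 * p ^ 2 := by
    refine hW.trans (le_of_eq ?_)
    rw [hp]; field_simp
  have hN : 0 < (D - 1) * (D - 3) := mul_pos (by linarith) (by linarith)
  set N := (D - 1) * (D - 3) with hNdef
  have hpr2 : p ^ 2 * r ^ 2 = 1 := by rw [← mul_pow, hpr, one_pow]
  have e3 : (p ^ 3 + δ * q ^ 3) * r ^ 2 = p + δ * q - δ * (R ^ 2 * q ^ 3) := by
    linear_combination p * hpr2 + δ * q * hRq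
  have e5 : (p ^ 5 + δ * q ^ 5) * r ^ 2 = p ^ 3 + δ * q ^ 3 - δ * (R ^ 2 * q ^ 5) := by
    linear_combination p ^ 3 * hpr2 + δ * q ^ 3 * hRq
  have t1 : (p ^ 3 + δ * q ^ 3) * e ≤ (p + δ * q - δ * (R ^ 2 * q ^ 3)) * g := by
    rw [← e3, mul_assoc]
    exact mul_le_mul_of_nonneg_left he (by positivity)
  have hR3 : R ^ 2 * q ^ 3 ≤ p := by
    have : R ^ 2 * q ^ 2 ≤ 1 := by nlinarith [sq_nonneg (r * q)]
    calc R ^ 2 * q ^ 3 = (R ^ 2 * q ^ 2) * q := by ring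
      _ ≤ 1 * q := by gcongr
      _ ≤ p := by linarith
  have t2 : 1 / 2 * δ * (R ^ 2 * q ^ 3) * (v * w) ≤ γ / 4 * (v * w * p) := by
    have h1 : δ * (R ^ 2 * q ^ 3) ≤ γ / 2 * p := by gcongr
    nlinarith [mul_nonneg hv hw]
  have t3 : 1 / 2 * W * (p + δ * q) * w ≤
      1 / 2 * ((1 - η) * N / 2 * p ^ 2 - γ * v) * (p + δ * q) * w := by
    gcongr
    linarith
  have t4 : γ * v * p ≤ γ * v * (p + δ * q) := by
    have : 0 ≤ δ * q := by positivity
    gcongr; linarith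
  have t5 : (1 - η) * (p + δ * q) ≤ (1 - η / 2) * p := by
    have h0 : 0 < δ * q := by positivity
    have h1 : 0 < η * p := by positivity
    have h2 : δ * q ≤ η / 2 * p := by gcongr
    have h3 : (1 - η) * (δ * q) ≤ η / 2 * p :=
      (mul_le_of_le_one_left h0.le (by linarith)).trans h2
    linarith
  have t6 : (1 - η) * N / 4 * p ^ 2 * (p + δ * q) * w ≤ (1 - η / 2) * N / 4 * p ^ 3 * w := by
    have := mul_le_mul_of_nonneg_right t5 (show 0 ≤ N / 4 * p ^ 2 * w by positivity)
    linarith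
  have t7 : N * p ^ 3 * w ≤ (D - 1) * (D * (p ^ 3 + δ * q ^ 3)
      - 3 * (p ^ 3 + δ * q ^ 3 - δ * (R ^ 2 * q ^ 5))) * w := by
    have h1 : (D - 1) * (D * (p ^ 3 + δ * q ^ 3)
      - 3 * (p ^ 3 + δ * q ^ 3 - δ * (R ^ 2 * q ^ 5))) * w = N * p ^ 3 * w +
        (N * (δ * q ^ 3) * w + 3 * (D - 1) * (δ * (R ^ 2 * q ^ 5)) * w) := by rw [hNdef]; ring
    have h2 : 0 < D - 1 := by linarith
    rw [h1]
    have : 0 ≤ N * (δ * q ^ 3) * w + 3 * (D - 1) * (δ * (R ^ 2 * q ^ 5)) * w := by positivity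
    linarith
  have t4' := mul_le_mul_of_nonneg_right t4 (show (0:ℝ) ≤ 1 / 2 * w by positivity)
  rw [e3, mul_assoc 3 (p ^ 5 + δ * q ^ 5), e5]
  simp only [pow_one]
  rw [show η * (D - 1) * (D - 3) = η * N by rw [hNdef]; ring]
  linarith

lemma eul_sq_le (a : Ed d → ℝ) (x : Ed d) : eul a x ^ 2 ≤ ‖x‖ ^ 2 * gr2 a x := by
  rw [← sum_coord_sq]
  exact Finset.sum_mul_sq_le_sq_mul_sq _ _ _

lemma pr_sq_le (a : Ed d → ℝ) (i : Fin d) (x : Ed d) : pr a i x ^ 2 ≤ gr2 a x :=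
  Finset.single_le_sum (f := fun j => pr a j x ^ 2) (fun _ _ => sq_nonneg _) (Finset.mem_univ i)

lemma gr2_nonneg (a : Ed d → ℝ) (x : Ed d) : 0 ≤ gr2 a x := Finset.sum_nonneg fun _ _ => sq_nonneg _

lemma kern_eq (δ R : ℝ) (n : ℕ) (x : Ed d) :
    kern δ R n x = ‖x‖⁻¹ ^ n + δ * (√(R ^ 2 + ‖x‖ ^ 2))⁻¹ ^ n := by simp [kern]

lemma kern_bounds {δ : ℝ} (R : ℝ) (hδ : 0 < δ) (hδ1 : δ ≤ 1) (n : ℕ) {x : Ed d} (hx : x ≠ 0) :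
    0 ≤ kern δ R n x ∧ kern δ R n x * ‖x‖ ^ n ≤ 2 := by
  have hxp : 0 < ‖x‖ := norm_pos_iff.2 hx
  obtain ⟨h1, h2, _⟩ := weight_facts (R := R) hxp
  rw [kern_eq]
  refine ⟨by positivity, ?_⟩
  have h3 : (√(R ^ 2 + ‖x‖ ^ 2))⁻¹ ^ n ≤ ‖x‖⁻¹ ^ n := by gcongr
  calc _ ≤ (‖x‖⁻¹ ^ n + 1 * ‖x‖⁻¹ ^ n) * ‖x‖ ^ n := by gcongr
    _ = 2 * (‖x‖⁻¹ * ‖x‖) ^ n := by rw [mul_pow]; ring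
    _ = 2 := by rw [inv_mul_cancel₀ hxp.ne']; simp

/-- Size of the Morawetz flux; divided by `|x|`, the right-hand side is integrable for a solution
(`Sol.morawetz_flux_int`). -/
lemma abs_flux_le {δ R τ : ℝ} {V a : Ed d → ℝ} (hd : 3 < d) (hδ : 0 < δ) (hδ1 : δ ≤ 1)
    (hτ : 0 ≤ τ) (i : Fin d) {x : Ed d} (hx : x ≠ 0) (hV : 0 ≤ V x) :
    |flux δ R τ V a i x| ≤ (d + 3) * gr2 a x + (V x + τ) * a x ^ 2 + 2 * d * (a x ^ 2 / ‖x‖ ^ 2) := by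
  have hxp : 0 < ‖x‖ := norm_pos_iff.2 hx
  obtain ⟨k1, k1'⟩ := kern_bounds R hδ hδ1 1 hx
  obtain ⟨k3, k3'⟩ := kern_bounds R hδ hδ1 3 hx
  have hd' : (3:ℝ) < d := by exact_mod_cast hd
  have hxi : |x i| ≤ ‖x‖ := by simpa using PiLp.norm_apply_le x i
  set s := √(gr2 a x) with hs
  have hs0 : 0 ≤ s := Real.sqrt_nonneg _
  have hs2 : s ^ 2 = gr2 a x := Real.sq_sqrt (gr2_nonneg a x)
  have hpi : |pr a i x| ≤ s := Real.abs_le_sqrt (pr_sq_le a i x)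
  have heu : |eul a x| ≤ ‖x‖ * s := by
    refine abs_le_of_sq_le_sq ?_ (by positivity)
    rw [mul_pow, hs2]; exact eul_sq_le a x
  set y := |a x| / ‖x‖ with hy
  have hy0 : 0 ≤ y := by positivity
  have hax : |a x| = y * ‖x‖ := by rw [hy]; field_simp
  have hy2 : a x ^ 2 / ‖x‖ ^ 2 = y ^ 2 := by rw [hy, div_pow, sq_abs]
  have ha2 : a x ^ 2 = y ^ 2 * ‖x‖ ^ 2 := by rw [← sq_abs, hax]; ring
  have hkx : |kern δ R 1 x * x i| ≤ 2 := by
    rw [abs_mul, abs_of_nonneg k1]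
    calc _ ≤ kern δ R 1 x * ‖x‖ := by gcongr
      _ ≤ 2 := by simpa using k1'
  have b1 : |kern δ R 1 x * pr a i x * (eul a x + ((d:ℝ) - 1) / 2 * a x)|
      ≤ 2 * s * (s + (d - 1) / 2 * y) := by
    have h1 : |eul a x + ((d:ℝ) - 1) / 2 * a x| ≤ ‖x‖ * (s + (d - 1) / 2 * y) := by
      refine (abs_add_le _ _).trans ?_
      rw [abs_mul, abs_of_nonneg (show (0:ℝ) ≤ ((d:ℝ) - 1) / 2 by linarith), hax]
      linarith
    rw [abs_mul, abs_mul, abs_of_nonneg k1]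
    have hd1 : (0:ℝ) ≤ ((d:ℝ) - 1) / 2 := by linarith
    calc _ ≤ kern δ R 1 x * s * (‖x‖ * (s + (d - 1) / 2 * y)) := by gcongr
      _ = (kern δ R 1 x * ‖x‖ ^ 1) * (s * (s + (d - 1) / 2 * y)) := by ring
      _ ≤ 2 * (s * (s + (d - 1) / 2 * y)) := by gcongr
      _ = _ := by ring
  have b2 : |1 / 2 * gr2 a x * (kern δ R 1 x * x i)| ≤ s ^ 2 := by
    rw [abs_mul, abs_of_nonneg (by have := gr2_nonneg a x; positivity), hs2]
    calc _ ≤ 1 / 2 * gr2 a x * 2 := by have := gr2_nonneg a x; gcongr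
      _ = _ := by ring
  have b3 : |1 / 2 * (V x - τ) * a x ^ 2 * (kern δ R 1 x * x i)| ≤ (V x + τ) * a x ^ 2 := by
    have h1 : |V x - τ| ≤ V x + τ := by rw [abs_le]; constructor <;> linarith
    rw [abs_mul, abs_mul, abs_mul, abs_of_nonneg (sq_nonneg (a x)), abs_of_pos (by norm_num : (0:ℝ) < 1/2)]
    calc _ ≤ 1 / 2 * (V x + τ) * a x ^ 2 * 2 := by gcongr
      _ = _ := by ring
  have b4 : |1 / 4 * ((d:ℝ) - 1) * (kern δ R 3 x * x i) * a x ^ 2| ≤ 1 / 2 * (d - 1) * y ^ 2 := by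
    rw [abs_mul, abs_mul, abs_mul, abs_of_nonneg (sq_nonneg (a x)), abs_mul, abs_of_nonneg k3,
      abs_of_nonneg (show (0:ℝ) ≤ (d:ℝ) - 1 by linarith), abs_of_pos (by norm_num : (0:ℝ) < 1/4), ha2]
    have hd1 : (0:ℝ) ≤ ((d:ℝ) - 1) := by linarith
    calc _ ≤ 1 / 4 * ((d:ℝ) - 1) * (kern δ R 3 x * ‖x‖) * (y ^ 2 * ‖x‖ ^ 2) := by gcongr
      _ = 1 / 4 * ((d:ℝ) - 1) * (kern δ R 3 x * ‖x‖ ^ 3) * y ^ 2 := by ring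
      _ ≤ 1 / 4 * ((d:ℝ) - 1) * 2 * y ^ 2 := by gcongr
      _ = _ := by ring
  rw [hy2, ← hs2]
  unfold flux
  refine (abs_add_le _ _).trans ((add_le_add ((abs_sub _ _).trans (add_le_add ((abs_sub _ _).trans
    (add_le_add b1 b2)) b3)) b4).trans ?_)
  nlinarith [sq_nonneg (s - y), mul_nonneg hs0 hy0, sq_nonneg s, sq_nonneg y]

lemma ae_ne_zero (hd : 3 < d) : ∀ᵐ x : Ed d, x ≠ 0 := by
  have : Nonempty (Fin d) := ⟨⟨0, by omega⟩⟩
  rw [ae_iff]; simp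

lemma aesm_of_continuousOn (hd : 3 < d) {g : Ed d → ℝ} (hg : ContinuousOn g {(0 : Ed d)}ᶜ) :
    AEStronglyMeasurable g := by
  have h1 := hg.aestronglyMeasurable (μ := volume) (measurableSet_singleton (0 : Ed d)).compl
  rwa [Measure.restrict_eq_self_of_ae_mem] at h1
  filter_upwards [ae_ne_zero hd] with x hx using hx

lemma continuousOn_div_norm {g : Ed d → ℝ} (hg : ContinuousOn g {(0 : Ed d)}ᶜ) (n : ℕ) :
    ContinuousOn (fun x => g x / ‖x‖ ^ n) {(0 : Ed d)}ᶜ :=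
  hg.div (by fun_prop) fun x hx => pow_ne_zero _ (norm_ne_zero_iff.2 hx)

lemma integrableOn_div_norm_cube (hd : 3 < d) {h : Ed d → ℝ} (hc : Continuous h) :
    IntegrableOn (fun x => h x / ‖x‖ ^ 3) (ball 0 1) := by
  obtain ⟨C, hC⟩ := (isCompact_closedBall (0 : Ed d) 1).exists_bound_of_continuousOn hc.continuousOn
  refine integrableOn_ball_of_norm_le_rpow (C := C) (α := 3) (by simp; omega) (by simp; exact_mod_cast hd) ?_
    (aesm_of_continuousOn hd (continuousOn_div_norm hc.continuousOn 3))
  refine (ae_restrict_iff' measurableSet_ball).2 (ae_of_all _ fun x hx => ?_)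
  rw [norm_div, norm_pow, norm_norm, Real.rpow_neg (norm_nonneg _), ← div_eq_mul_inv]
  have e : ‖x‖ ^ (3:ℝ) = ‖x‖ ^ 3 := by exact_mod_cast Real.rpow_natCast ‖x‖ 3
  rw [e]
  gcongr
  exact hC x (ball_subset_closedBall hx)

/-- For `d > 3`, dividing a continuous integrable function by `|x|³` keeps it integrable. -/
lemma integrable_div_norm_cube (hd : 3 < d) {h : Ed d → ℝ} (hc : Continuous h) (hi : Integrable h) :
    Integrable (fun x => h x / ‖x‖ ^ 3) := by
  have h1 := (integrableOn_div_norm_cube hd hc).integrable_indicator measurableSet_ball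
  refine (h1.abs.add hi.abs).mono' (aesm_of_continuousOn hd (continuousOn_div_norm hc.continuousOn 3))
    (ae_of_all _ fun x => ?_)
  simp only [Pi.add_apply]
  by_cases hx : x ∈ ball (0 : Ed d) 1
  · rw [indicator_of_mem hx, Real.norm_eq_abs]
    linarith [abs_nonneg (h x)]
  · rw [indicator_of_notMem hx, Real.norm_eq_abs, abs_div, abs_of_nonneg (by positivity : 0 ≤ ‖x‖ ^ 3)]
    have : 1 ≤ ‖x‖ := by simpa using hx
    have h3 : 1 ≤ ‖x‖ ^ 3 := one_le_pow₀ this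
    have := div_le_self (abs_nonneg (h x)) h3
    simp only [abs_zero]
    linarith

/-- `1/r`, `1/r²` are dominated by `1 + 1/r³`. -/
lemma div_norm_le {t r : ℝ} (ht : 0 ≤ t) (hr : 0 < r) :
    t / r ≤ t + t / r ^ 3 ∧ t / r ^ 2 ≤ t + t / r ^ 3 := by
  have key : ∀ n : ℕ, n ≤ 3 → t / r ^ n ≤ t + t / r ^ 3 := by
    intro n hn
    have h3 : 0 ≤ t / r ^ 3 := by positivity
    rcases le_total 1 r with h | h
    · have := div_le_self ht (one_le_pow₀ h : 1 ≤ r ^ n)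
      linarith
    · have : t / r ^ n ≤ t / r ^ 3 := by
        gcongr t / ?_
        exact pow_le_pow_of_le_one hr.le h hn
      linarith
  exact ⟨by simpa using key 1 (by norm_num), key 2 (by norm_num)⟩
end

/-! ### The real system: energy and charge -/

/-- The resolvent equation for `u = a + i b` and `f = f₁ + i f₂`, split into real and imaginary
parts; `e` stands for the signed coefficient `± ε`. -/
structure Sol {d : ℕ} (V a b f₁ f₂ : Ed d → ℝ) (e τ : ℝ) : Prop where
  hd : 3 < d
  hV0 : ∀ x, 0 ≤ V x
  hV : ContDiffOn ℝ 1 V {(0 : Ed d)}ᶜ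
  ha : ContDiff ℝ 2 a
  hb : ContDiff ℝ 2 b
  hw : Integrable fun x => a x ^ 2 + b x ^ 2
  hg : Integrable fun x => gr2 a x + gr2 b x
  hf : Integrable fun x => f₁ x ^ 2 + f₂ x ^ 2
  eq₁ : ∀ x, lapR a x = (V x - τ) * a x - e * b x - f₁ x
  eq₂ : ∀ x, lapR b x = (V x - τ) * b x + e * a x - f₂ x
  hτ : 0 ≤ τ

namespace Sol
variable {d : ℕ} {V a b f₁ f₂ : Ed d → ℝ} {e τ : ℝ}

lemma contLap {c : Ed d → ℝ} (hc : ContDiff ℝ 2 c) : Continuous (lapR c) := by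
  unfold lapR
  refine continuous_finsetSum _ fun i _ => ?_
  exact (contDiff_pr (n := 0) (by simpa using contDiff_pr (n := 1) (by exact_mod_cast hc) i) i).continuous

lemma contf₁ (S : Sol V a b f₁ f₂ e τ) : ContinuousOn f₁ {(0 : Ed d)}ᶜ := by
  have h : f₁ = fun x => (V x - τ) * a x - e * b x - lapR a x := by
    funext x; have := S.eq₁ x; linarith
  rw [h]
  have h1 := S.hV.continuousOn
  have h2 := S.ha.continuous.continuousOn (s := {(0 : Ed d)}ᶜ)
  have h3 := S.hb.continuous.continuousOn (s := {(0 : Ed d)}ᶜ)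
  have h4 := (contLap S.ha).continuousOn (s := {(0 : Ed d)}ᶜ)
  fun_prop

lemma contf₂ (S : Sol V a b f₁ f₂ e τ) : ContinuousOn f₂ {(0 : Ed d)}ᶜ := by
  have h : f₂ = fun x => (V x - τ) * b x + e * a x - lapR b x := by
    funext x; have := S.eq₂ x; linarith
  rw [h]
  have h1 := S.hV.continuousOn
  have h2 := S.ha.continuous.continuousOn (s := {(0 : Ed d)}ᶜ)
  have h3 := S.hb.continuous.continuousOn (s := {(0 : Ed d)}ᶜ)
  have h4 := (contLap S.hb).continuousOn (s := {(0 : Ed d)}ᶜ)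
  fun_prop

lemma contw (S : Sol V a b f₁ f₂ e τ) : Continuous fun x => a x ^ 2 + b x ^ 2 := by
  have h2 := S.ha.continuous
  have h3 := S.hb.continuous
  fun_prop

lemma contg (S : Sol V a b f₁ f₂ e τ) : Continuous fun x => gr2 a x + gr2 b x :=
  (contDiff_gr2 S.ha).continuous.add (contDiff_gr2 S.hb).continuous

lemma int_w3 (S : Sol V a b f₁ f₂ e τ) : Integrable fun x => (a x ^ 2 + b x ^ 2) / ‖x‖ ^ 3 :=
  integrable_div_norm_cube S.hd S.contw S.hw

lemma int_g1 (S : Sol V a b f₁ f₂ e τ) : Integrable fun x => (gr2 a x + gr2 b x) / ‖x‖ := by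
  refine (S.hg.add (integrable_div_norm_cube S.hd S.contg S.hg)).mono'
    (by simpa using aesm_of_continuousOn S.hd (continuousOn_div_norm S.contg.continuousOn 1)) ?_
  filter_upwards [ae_ne_zero S.hd] with x hx
  have h0 : 0 ≤ gr2 a x + gr2 b x := add_nonneg (gr2_nonneg _ _) (gr2_nonneg _ _)
  rw [Real.norm_eq_abs, abs_of_nonneg (by positivity)]
  exact (div_norm_le h0 (norm_pos_iff.2 hx)).1

/-- Majorant for every product of two of the quantities `f`, `u`, `∇u`, `u / |x|`. -/
def maj (a b f₁ f₂ : Ed d → ℝ) (x : Ed d) : ℝ :=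
  (f₁ x ^ 2 + f₂ x ^ 2) + 2 * (a x ^ 2 + b x ^ 2) + (a x ^ 2 + b x ^ 2) / ‖x‖ ^ 3
    + (gr2 a x + gr2 b x)

lemma le_maj (x : Ed d) : f₁ x ^ 2 + f₂ x ^ 2 + (a x ^ 2 + b x ^ 2) + (gr2 a x + gr2 b x)
      ≤ maj a b f₁ f₂ x := by
  have : 0 ≤ (a x ^ 2 + b x ^ 2) / ‖x‖ ^ 3 := by positivity
  unfold maj
  nlinarith [sq_nonneg (a x), sq_nonneg (b x)]

lemma le_maj' {x : Ed d} (hx : x ≠ 0) : f₁ x ^ 2 + f₂ x ^ 2 + (a x ^ 2 + b x ^ 2) +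
    (a x ^ 2 + b x ^ 2) / ‖x‖ ^ 2 + (gr2 a x + gr2 b x) ≤ maj a b f₁ f₂ x := by
  have := (div_norm_le (show 0 ≤ a x ^ 2 + b x ^ 2 by positivity) (norm_pos_iff.2 hx)).2
  unfold maj
  linarith

lemma int_maj (S : Sol V a b f₁ f₂ e τ) : Integrable (maj a b f₁ f₂) :=
  ((S.hf.add (S.hw.const_mul 2)).add S.int_w3).add S.hg

lemma energy_pr {c c' : Ed d → ℝ} (hc : ContDiff ℝ 2 c) (hc' : ContDiff ℝ 2 c') (i : Fin d)
    (x : Ed d) : pr (fun y => c y * pr c' i y) i x = pr c i x * pr c' i x + c x * pr (pr c' i) i x := by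
  have h1 := hasDerivAt_line (hc.differentiable two_ne_zero x) i
  have h2' := (contDiff_pr (n := 1) (by exact_mod_cast hc') i).differentiable one_ne_zero x
  have h2 := hasDerivAt_line h2' i
  refine pr_eq_of_line ((hc.differentiable two_ne_zero x).mul h2') ?_
  refine (h1.mul h2).congr_deriv ?_
  simp

lemma pr_add {c c' : Ed d → ℝ} {x : Ed d} (hc : DifferentiableAt ℝ c x)
    (hc' : DifferentiableAt ℝ c' x) (i : Fin d) :
    pr (fun y => c y + c' y) i x = pr c i x + pr c' i x := by
  unfold pr; rw [fderiv_fun_add hc hc']; rfl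

lemma pr_sub {c c' : Ed d → ℝ} {x : Ed d} (hc : DifferentiableAt ℝ c x)
    (hc' : DifferentiableAt ℝ c' x) (i : Fin d) :
    pr (fun y => c y - c' y) i x = pr c i x - pr c' i x := by
  unfold pr; rw [fderiv_fun_sub hc hc']; rfl

lemma cd1 {c c' : Ed d → ℝ} (hc : ContDiff ℝ 2 c) (hc' : ContDiff ℝ 2 c') (i : Fin d) :
    ContDiff ℝ 1 fun y => c y * pr c' i y :=
  (hc.of_le (by norm_num)).mul (contDiff_pr (n := 1) (by exact_mod_cast hc') i)

lemma abs_mul_pr_le (c c' : Ed d → ℝ) (i : Fin d) {x : Ed d} (hx : x ≠ 0) :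
    |c x * pr c' i x / ‖x‖| ≤ c x ^ 2 + c x ^ 2 / ‖x‖ ^ 3 + gr2 c' x / ‖x‖ := by
  have hxp : 0 < ‖x‖ := norm_pos_iff.2 hx
  have h1 : |c x * pr c' i x| ≤ c x ^ 2 + gr2 c' x := by
    have := pr_sq_le c' i x
    rw [abs_le]; constructor <;> nlinarith [sq_nonneg (c x - pr c' i x), sq_nonneg (c x + pr c' i x)]
  have h2 := (div_norm_le (sq_nonneg (c x)) hxp).1
  rw [abs_div, abs_of_pos hxp]
  calc _ ≤ (c x ^ 2 + gr2 c' x) / ‖x‖ := by gcongr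
    _ = c x ^ 2 / ‖x‖ + gr2 c' x / ‖x‖ := add_div _ _ _
    _ ≤ _ := by linarith

/-- Integrability criterion for the fluxes of the energy and charge identities. -/
lemma flux_int (S : Sol V a b f₁ f₂ e τ) (P : Ed d → ℝ) (hP : ContDiff ℝ 1 P) (K : ℝ) (hK : ∀ x, x ≠ 0 → |P x / ‖x‖| ≤
    K * (a x ^ 2 + b x ^ 2 + (a x ^ 2 + b x ^ 2) / ‖x‖ ^ 3 + (gr2 a x + gr2 b x) / ‖x‖)) :
    Integrable fun x => P x / ‖x‖ := by
  refine (((S.hw.add S.int_w3).add S.int_g1).const_mul K).mono'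
    (by simpa using aesm_of_continuousOn S.hd (continuousOn_div_norm hP.continuous.continuousOn 1)) ?_
  filter_upwards [ae_ne_zero S.hd] with x hx
  exact hK x hx

lemma mix (c c' : Ed d → ℝ) (hcc : (c = a ∨ c = b) ∧ (c' = a ∨ c' = b)) {x : Ed d} (i : Fin d)
    (hx : x ≠ 0) : |c x * pr c' i x / ‖x‖| ≤
    (a x ^ 2 + b x ^ 2 + (a x ^ 2 + b x ^ 2) / ‖x‖ ^ 3 + (gr2 a x + gr2 b x) / ‖x‖) := by
  refine (abs_mul_pr_le c c' i hx).trans ?_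
  have h1 : c x ^ 2 ≤ a x ^ 2 + b x ^ 2 := by
    rcases hcc.1 with h | h <;> rw [h] <;> nlinarith [sq_nonneg (a x), sq_nonneg (b x)]
  have h2 : gr2 c' x ≤ gr2 a x + gr2 b x := by
    rcases hcc.2 with h | h <;> rw [h] <;> linarith [gr2_nonneg a x, gr2_nonneg b x]
  gcongr

/-- Energy inequality: the real part of the pairing of the equation with `u`. -/
lemma energy (S : Sol V a b f₁ f₂ e τ) : ∫⁻ x, ENNReal.ofReal ((gr2 a x + gr2 b x) + V x * (a x ^ 2 + b x ^ 2)) ≤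
    ENNReal.ofReal (∫ x, (τ * (a x ^ 2 + b x ^ 2) + (f₁ x * a x + f₂ x * b x))) := by
  refine divergence_ineq (by have := S.hd; omega) (fun i x => a x * pr a i x + b x * pr b i x)
    (fun i => ((cd1 S.ha S.ha i).add (cd1 S.hb S.hb i)).contDiffOn) ?_ _ _ ?_ ?_ ?_
  · intro i
    refine S.flux_int _ ((cd1 S.ha S.ha i).add (cd1 S.hb S.hb i)) 2 fun x hx => ?_
    rw [add_div]
    refine (abs_add_le _ _).trans ?_
    have h1 := mix (a := a) (b := b) a a (by simp) i hx
    have h2 := mix (a := a) (b := b) b b (by simp) i hx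
    linarith
  · intro x _
    have := S.hV0 x
    have := gr2_nonneg a x
    have := gr2_nonneg b x
    positivity
  · refine (S.hw.const_mul τ).add (S.int_maj.mono' ?_ (ae_of_all _ fun x => ?_))
    · exact aesm_of_continuousOn S.hd ((S.contf₁.mul S.ha.continuous.continuousOn).add
        (S.contf₂.mul S.hb.continuous.continuousOn))
    · refine le_trans ?_ (le_maj x)
      have := gr2_nonneg a x
      have := gr2_nonneg b x
      rw [Real.norm_eq_abs, abs_le]
      constructor <;> nlinarith [sq_nonneg (f₁ x - a x), sq_nonneg (f₁ x + a x),
        sq_nonneg (f₂ x - b x), sq_nonneg (f₂ x + b x)]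
  · intro x _
    change ∑ i, pr (fun x => a x * pr a i x + b x * pr b i x) i x = _
    have : ∀ i, pr (fun x => a x * pr a i x + b x * pr b i x) i x =
        (pr a i x ^ 2 + a x * pr (pr a i) i x) + (pr b i x ^ 2 + b x * pr (pr b i) i x) := by
      intro i
      rw [pr_add ((cd1 S.ha S.ha i).differentiable one_ne_zero x)
        ((cd1 S.hb S.hb i).differentiable one_ne_zero x), energy_pr S.ha S.ha, energy_pr S.hb S.hb]
      ring
    simp_rw [this]
    simp only [Finset.sum_add_distrib, ← Finset.mul_sum]
    rw [show ∑ i, pr a i x ^ 2 = gr2 a x from rfl, show ∑ i, pr (pr a i) i x = lapR a x from rfl,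
      show ∑ i, pr b i x ^ 2 = gr2 b x from rfl, show ∑ i, pr (pr b i) i x = lapR b x from rfl,
      S.eq₁, S.eq₂]
    ring

/-- Charge inequality, multiplied by `e`: the imaginary part of the pairing of the equation with `u`. -/
lemma charge (S : Sol V a b f₁ f₂ e τ) : ∫⁻ x, ENNReal.ofReal (e ^ 2 * (a x ^ 2 + b x ^ 2)) ≤
    ENNReal.ofReal (∫ x, e * (a x * f₂ x - b x * f₁ x)) := by
  have hcd : ∀ i, ContDiff ℝ 1 fun x => e * (a x * pr b i x - b x * pr a i x) := fun i =>
    contDiff_const.mul ((cd1 S.ha S.hb i).sub (cd1 S.hb S.ha i))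
  refine divergence_ineq (by have := S.hd; omega)
    (fun i x => e * (a x * pr b i x - b x * pr a i x))
    (fun i => (hcd i).contDiffOn) ?_ _ _ ?_ ?_ ?_
  · intro i
    refine S.flux_int _ (hcd i) (|e| * 2) fun x hx => ?_
    rw [mul_div_assoc, abs_mul, sub_div, mul_assoc]
    refine mul_le_mul_of_nonneg_left ((abs_sub _ _).trans ?_) (abs_nonneg _)
    have h1 := mix (a := a) (b := b) a b (by simp) i hx
    have h2 := mix (a := a) (b := b) b a (by simp) i hx
    linarith
  · intro x _
    positivity
  · refine Integrable.const_mul (S.int_maj.mono' ?_ (ae_of_all _ fun x => ?_)) e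
    · exact aesm_of_continuousOn S.hd ((S.ha.continuous.continuousOn.mul S.contf₂).sub
        (S.hb.continuous.continuousOn.mul S.contf₁))
    · refine le_trans ?_ (le_maj x)
      have := gr2_nonneg a x
      have := gr2_nonneg b x
      rw [Real.norm_eq_abs, abs_le]
      constructor <;> nlinarith [sq_nonneg (f₁ x - b x), sq_nonneg (f₁ x + b x),
        sq_nonneg (f₂ x - a x), sq_nonneg (f₂ x + a x)]
  · intro x _
    change ∑ i, pr (fun x => e * (a x * pr b i x - b x * pr a i x)) i x = _
    have : ∀ i, pr (fun x => e * (a x * pr b i x - b x * pr a i x)) i x =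
        e * (a x * pr (pr b i) i x - b x * pr (pr a i) i x) := by
      intro i
      have h1 := (cd1 S.ha S.hb i).differentiable one_ne_zero x
      have h2 := (cd1 S.hb S.ha i).differentiable one_ne_zero x
      have : pr (fun x => e * (a x * pr b i x - b x * pr a i x)) i x =
          e * pr (fun x => a x * pr b i x - b x * pr a i x) i x := by
        unfold pr at h1 h2 ⊢; rw [fderiv_const_mul (h1.fun_sub h2)]; rfl
      rw [this, pr_sub h1 h2, energy_pr S.ha S.hb, energy_pr S.hb S.ha]
      ring
    simp_rw [this]
    simp only [Finset.sum_sub_distrib, ← Finset.mul_sum]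
    rw [show ∑ i, pr (pr a i) i x = lapR a x from rfl,
      show ∑ i, pr (pr b i) i x = lapR b x from rfl, S.eq₁, S.eq₂]
    ring
end Sol

/-! ### The Morawetz estimate -/

lemma ofReal_integral_le {α : Type*} [MeasurableSpace α] {μ : Measure α} {B G : α → ℝ}
    (h : ∀ᵐ x ∂μ, B x ≤ G x) :
    ENNReal.ofReal (∫ x, B x ∂μ) ≤ ∫⁻ x, ENNReal.ofReal (G x) ∂μ := by
  by_cases hB : Integrable B μ
  swap
  · simp [integral_undef hB]
  rw [integral_eq_lintegral_pos_part_sub_lintegral_neg_part hB]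
  refine (ENNReal.ofReal_le_ofReal (sub_le_self _ toReal_nonneg)).trans (ofReal_toReal_le.trans ?_)
  exact lintegral_mono_ae (h.mono fun x hx => ENNReal.ofReal_le_ofReal hx)

/-- Cauchy–Schwarz in the plane. -/
lemma dot_le_sqrt (p q r s : ℝ) : p * q + r * s ≤ √(p ^ 2 + r ^ 2) * √(q ^ 2 + s ^ 2) := by
  rw [← Real.sqrt_mul (by positivity)]
  refine Real.le_sqrt_of_sq_le ?_
  nlinarith [sq_nonneg (p * s - r * q)]

namespace Sol
variable {d : ℕ} {V a b f₁ f₂ : Ed d → ℝ} {e τ : ℝ}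

lemma int_Vw (S : Sol V a b f₁ f₂ e τ) : Integrable fun x => V x * (a x ^ 2 + b x ^ 2) := by
  refine ⟨aesm_of_continuousOn S.hd (S.hV.continuousOn.mul S.contw.continuousOn), ?_⟩
  refine lt_of_le_of_lt ?_ (lt_of_le_of_lt S.energy ENNReal.ofReal_lt_top)
  refine lintegral_mono fun x => ?_
  have := S.hV0 x
  have := gr2_nonneg a x
  have := gr2_nonneg b x
  rw [← ofReal_norm, Real.norm_eq_abs, abs_of_nonneg (by positivity)]
  exact ENNReal.ofReal_le_ofReal (by linarith)

/-- Near the origin `V |u|²` is controlled through the equation itself, since `V` may be singular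
there. -/
lemma int_Vw1 (S : Sol V a b f₁ f₂ e τ) :
    Integrable fun x => V x * (a x ^ 2 + b x ^ 2) / ‖x‖ := by
  have hc : Continuous fun x => |a x * lapR a x + b x * lapR b x + τ * (a x ^ 2 + b x ^ 2)| := by
    have := contLap S.ha
    have := contLap S.hb
    have := S.ha.continuous
    have := S.hb.continuous
    fun_prop
  have h1 := (integrableOn_div_norm_cube S.hd hc).integrable_indicator measurableSet_ball
  have hm := aesm_of_continuousOn S.hd
    (continuousOn_div_norm (S.hV.continuousOn.mul S.contw.continuousOn) 1)
  refine ((h1.add S.int_maj).add S.int_Vw).mono' (by simpa using hm) ?_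
  filter_upwards [ae_ne_zero S.hd] with x hx
  have hxp : 0 < ‖x‖ := norm_pos_iff.2 hx
  have hV := S.hV0 x
  have hga := gr2_nonneg a x
  have hgb := gr2_nonneg b x
  have hVw : 0 ≤ V x * (a x ^ 2 + b x ^ 2) := by positivity
  have hm := le_maj' (a := a) (b := b) (f₁ := f₁) (f₂ := f₂) hx
  have hm0 : 0 ≤ (a x ^ 2 + b x ^ 2) / ‖x‖ ^ 2 := by positivity
  rw [Real.norm_eq_abs, abs_of_nonneg (by positivity)]
  simp only [Pi.add_apply]
  by_cases hb : x ∈ ball (0 : Ed d) 1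
  · rw [indicator_of_mem hb]
    have hx1 : ‖x‖ < 1 := by simpa using hb
    set L := a x * lapR a x + b x * lapR b x + τ * (a x ^ 2 + b x ^ 2) with hL
    have key : V x * (a x ^ 2 + b x ^ 2) = L + (f₁ x * a x + f₂ x * b x) := by
      rw [hL, S.eq₁, S.eq₂]; ring
    have k1 : L / ‖x‖ ≤ |L| / ‖x‖ ^ 3 := by
      calc L / ‖x‖ ≤ |L| / ‖x‖ := by gcongr; exact le_abs_self L
        _ = |L| / ‖x‖ ^ 1 := by rw [pow_one]
        _ ≤ _ := div_le_div_of_nonneg_left (abs_nonneg _) (by positivity)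
            (pow_le_pow_of_le_one hxp.le hx1.le (by norm_num))
    have k2 : (f₁ x * a x + f₂ x * b x) / ‖x‖ ≤
        f₁ x ^ 2 + f₂ x ^ 2 + (a x ^ 2 + b x ^ 2) / ‖x‖ ^ 2 := by
      have : (a x ^ 2 + b x ^ 2) / ‖x‖ ^ 2 = (a x / ‖x‖) ^ 2 + (b x / ‖x‖) ^ 2 := by ring
      rw [this, show (f₁ x * a x + f₂ x * b x) / ‖x‖ = f₁ x * (a x / ‖x‖) + f₂ x * (b x / ‖x‖) by ring]
      nlinarith [sq_nonneg (f₁ x - a x / ‖x‖), sq_nonneg (f₂ x - b x / ‖x‖),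
        sq_nonneg (f₁ x + a x / ‖x‖), sq_nonneg (f₂ x + b x / ‖x‖)]
    rw [show V x * (a x ^ 2 + b x ^ 2) / ‖x‖ = L / ‖x‖ + (f₁ x * a x + f₂ x * b x) / ‖x‖ by
      rw [key, add_div]]
    nlinarith [sq_nonneg (a x), sq_nonneg (b x)]
  · rw [indicator_of_notMem hb]
    have hx1 : 1 ≤ ‖x‖ := by simpa using hb
    have := div_le_self hVw hx1
    nlinarith [sq_nonneg (a x), sq_nonneg (b x), sq_nonneg (f₁ x), sq_nonneg (f₂ x)]

lemma int_w1 (S : Sol V a b f₁ f₂ e τ) : Integrable fun x => (a x ^ 2 + b x ^ 2) / ‖x‖ := by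
  refine (S.hw.add S.int_w3).mono'
    (by simpa using aesm_of_continuousOn S.hd (continuousOn_div_norm S.contw.continuousOn 1)) ?_
  filter_upwards [ae_ne_zero S.hd] with x hx
  rw [Real.norm_eq_abs, abs_of_nonneg (by positivity)]
  exact (div_norm_le (by positivity) (norm_pos_iff.2 hx)).1

lemma morawetz_flux_int (S : Sol V a b f₁ f₂ e τ) {δ : ℝ} (R : ℝ) (hδ : 0 < δ) (hδ1 : δ ≤ 1)
    (i : Fin d) : Integrable fun x => (flux δ R τ V a i x + flux δ R τ V b i x) / ‖x‖ := by
  have hm := aesm_of_continuousOn S.hd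
    (continuousOn_div_norm ((contDiffOn_flux (δ := δ) (R := R) (τ := τ) S.hV S.ha i).continuousOn.add
      (contDiffOn_flux (δ := δ) (R := R) (τ := τ) S.hV S.hb i).continuousOn) 1)
  refine ((((S.int_g1.const_mul (d + 3)).add S.int_Vw1).add (S.int_w1.const_mul τ)).add
    (S.int_w3.const_mul (2 * d))).mono' (by simpa using hm) ?_
  filter_upwards [ae_ne_zero S.hd] with x hx
  have hxp : 0 < ‖x‖ := norm_pos_iff.2 hx
  have h1 := abs_flux_le (a := a) (R := R) S.hd hδ hδ1 S.hτ i hx (S.hV0 x)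
  have h2 := abs_flux_le (a := b) (R := R) S.hd hδ hδ1 S.hτ i hx (S.hV0 x)
  rw [Real.norm_eq_abs, abs_div, abs_of_pos hxp]
  calc _ ≤ ((d + 3) * (gr2 a x + gr2 b x) + (V x * (a x ^ 2 + b x ^ 2)) + τ * (a x ^ 2 + b x ^ 2)
        + 2 * d * ((a x ^ 2 + b x ^ 2) / ‖x‖ ^ 2)) / ‖x‖ := by
        gcongr
        refine (abs_add_le _ _).trans ((add_le_add h1 h2).trans (le_of_eq ?_))
        ring
    _ = _ := by simp only [Pi.add_apply]; field_simp

/-- Pointwise size of the right-hand side produced by the Morawetz multiplier. -/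
def rhs (a b f₁ f₂ : Ed d → ℝ) (e : ℝ) (x : Ed d) : ℝ :=
  2 * (√(f₁ x ^ 2 + f₂ x ^ 2) * √(gr2 a x + gr2 b x)
    + ((d:ℝ) - 1) / 2 * (√(f₁ x ^ 2 + f₂ x ^ 2) * (√(a x ^ 2 + b x ^ 2) / ‖x‖))
    + |e| * (√(a x ^ 2 + b x ^ 2) * √(gr2 a x + gr2 b x)))

/-- The source term tested against the Morawetz multiplier. -/
def src (δ R : ℝ) (a b f₁ f₂ : Ed d → ℝ) (e : ℝ) (x : Ed d) : ℝ :=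
  kern δ R 1 x * (f₁ x * (eul a x + ((d:ℝ) - 1) / 2 * a x)
    + f₂ x * (eul b x + ((d:ℝ) - 1) / 2 * b x) + e * (b x * eul a x - a x * eul b x))

lemma abs_src_le (hd : 3 < d) {δ : ℝ} (R : ℝ) (hδ : 0 < δ) (hδ1 : δ ≤ 1) {x : Ed d} (hx : x ≠ 0) :
    |src δ R a b f₁ f₂ e x| ≤ rhs a b f₁ f₂ e x := by
  have hxp : 0 < ‖x‖ := norm_pos_iff.2 hx
  have hd' : (3:ℝ) < d := by exact_mod_cast hd
  obtain ⟨k1, k1'⟩ := kern_bounds R hδ hδ1 1 hx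
  rw [pow_one] at k1'
  have hE : √(eul a x ^ 2 + eul b x ^ 2) ≤ ‖x‖ * √(gr2 a x + gr2 b x) := by
    rw [Real.sqrt_le_left (by positivity), mul_pow,
      Real.sq_sqrt (add_nonneg (gr2_nonneg a x) (gr2_nonneg b x))]
    linarith [eul_sq_le a x, eul_sq_le b x]
  have c1 : |f₁ x * eul a x + f₂ x * eul b x| ≤
      √(f₁ x ^ 2 + f₂ x ^ 2) * (‖x‖ * √(gr2 a x + gr2 b x)) := by
    refine le_trans ?_ (mul_le_mul_of_nonneg_left hE (Real.sqrt_nonneg _))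
    rw [abs_le']
    refine ⟨dot_le_sqrt _ _ _ _, ?_⟩
    have := dot_le_sqrt (-f₁ x) (eul a x) (-f₂ x) (eul b x)
    simp only [neg_sq] at this; linarith
  have c2 : |f₁ x * a x + f₂ x * b x| ≤ √(f₁ x ^ 2 + f₂ x ^ 2) * √(a x ^ 2 + b x ^ 2) := by
    rw [abs_le']
    refine ⟨dot_le_sqrt _ _ _ _, ?_⟩
    have := dot_le_sqrt (-f₁ x) (a x) (-f₂ x) (b x)
    simp only [neg_sq] at this; linarith
  have c3 : |b x * eul a x - a x * eul b x| ≤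
      √(a x ^ 2 + b x ^ 2) * (‖x‖ * √(gr2 a x + gr2 b x)) := by
    refine le_trans ?_ (mul_le_mul_of_nonneg_left hE (Real.sqrt_nonneg _))
    rw [add_comm (a x ^ 2), abs_le']
    constructor
    · have := dot_le_sqrt (b x) (eul a x) (-a x) (eul b x)
      simp only [neg_sq] at this; linarith
    · have := dot_le_sqrt (-b x) (eul a x) (a x) (eul b x)
      simp only [neg_sq] at this; linarith
  have hK : kern δ R 1 x ≤ 2 / ‖x‖ := by rw [le_div_iff₀ hxp]; exact k1'
  have hsum : |f₁ x * (eul a x + ((d:ℝ) - 1) / 2 * a x)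
    + f₂ x * (eul b x + ((d:ℝ) - 1) / 2 * b x) + e * (b x * eul a x - a x * eul b x)| ≤
      √(f₁ x ^ 2 + f₂ x ^ 2) * (‖x‖ * √(gr2 a x + gr2 b x))
      + ((d:ℝ) - 1) / 2 * (√(f₁ x ^ 2 + f₂ x ^ 2) * √(a x ^ 2 + b x ^ 2))
      + |e| * (√(a x ^ 2 + b x ^ 2) * (‖x‖ * √(gr2 a x + gr2 b x))) := by
    rw [show f₁ x * (eul a x + ((d:ℝ) - 1) / 2 * a x)
      + f₂ x * (eul b x + ((d:ℝ) - 1) / 2 * b x) + e * (b x * eul a x - a x * eul b x) =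
      (f₁ x * eul a x + f₂ x * eul b x) + ((d:ℝ) - 1) / 2 * (f₁ x * a x + f₂ x * b x)
        + e * (b x * eul a x - a x * eul b x) by ring]
    refine (abs_add_le _ _).trans (add_le_add ((abs_add_le _ _).trans (add_le_add c1 ?_)) ?_)
    · rw [abs_mul, abs_of_nonneg (by linarith : (0:ℝ) ≤ ((d:ℝ) - 1) / 2)]
      exact mul_le_mul_of_nonneg_left c2 (by linarith)
    · rw [abs_mul]
      exact mul_le_mul_of_nonneg_left c3 (abs_nonneg _)
  unfold src rhs
  rw [abs_mul, abs_of_nonneg k1]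
  refine (mul_le_mul hK hsum (abs_nonneg _) (by positivity)).trans (le_of_eq ?_)
  field_simp

lemma int_src (S : Sol V a b f₁ f₂ e τ) {δ : ℝ} (R : ℝ) (hδ : 0 < δ) (hδ1 : δ ≤ 1) :
    Integrable (src δ R a b f₁ f₂ e) := by
  have hd' : (3:ℝ) < d := by exact_mod_cast S.hd
  refine (S.int_maj.const_mul (2 * (1 + ((d:ℝ) - 1) / 2 + |e|))).mono' (aesm_of_continuousOn S.hd ?_) ?_
  · have h0 := (contDiffOn_kern (d := d) δ R 1).continuousOn
    have h1 := S.contf₁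
    have h2 := S.contf₂
    have h3 := S.ha.continuous.continuousOn (s := {(0 : Ed d)}ᶜ)
    have h4 := S.hb.continuous.continuousOn (s := {(0 : Ed d)}ᶜ)
    have h5 := (contDiff_eul S.ha).continuous.continuousOn (s := {(0 : Ed d)}ᶜ)
    have h6 := (contDiff_eul S.hb).continuous.continuousOn (s := {(0 : Ed d)}ᶜ)
    unfold src
    fun_prop
  · filter_upwards [ae_ne_zero S.hd] with x hx
    refine (abs_src_le S.hd R hδ hδ1 hx).trans ?_
    have hm := le_maj' (a := a) (b := b) (f₁ := f₁) (f₂ := f₂) hx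
    have hga := gr2_nonneg a x
    have hgb := gr2_nonneg b x
    set X := √(f₁ x ^ 2 + f₂ x ^ 2) with hX
    set Y := √(gr2 a x + gr2 b x) with hY
    set Z := √(a x ^ 2 + b x ^ 2) with hZ
    have hX2 : X ^ 2 = f₁ x ^ 2 + f₂ x ^ 2 := Real.sq_sqrt (by positivity)
    have hY2 : Y ^ 2 = gr2 a x + gr2 b x := Real.sq_sqrt (by positivity)
    have hZ2 : Z ^ 2 = a x ^ 2 + b x ^ 2 := Real.sq_sqrt (by positivity)
    rw [← hX2, ← hY2, ← hZ2] at hm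
    have hq : Z ^ 2 / ‖x‖ ^ 2 = (Z / ‖x‖) ^ 2 := by ring
    rw [hq] at hm
    set M := maj a b f₁ f₂ x
    have m1 : X * Y ≤ M := by nlinarith [sq_nonneg (X - Y), sq_nonneg (Z / ‖x‖), sq_nonneg Z, sq_nonneg X, sq_nonneg Y]
    have m2 : X * (Z / ‖x‖) ≤ M := by nlinarith [sq_nonneg (X - Z / ‖x‖), sq_nonneg (Z / ‖x‖), sq_nonneg Z, sq_nonneg X, sq_nonneg Y]
    have m3 : Z * Y ≤ M := by nlinarith [sq_nonneg (Z - Y), sq_nonneg (Z / ‖x‖), sq_nonneg Z, sq_nonneg X, sq_nonneg Y]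
    have n2 := mul_le_mul_of_nonneg_left m2 (by linarith : (0:ℝ) ≤ ((d:ℝ) - 1) / 2)
    have n3 := mul_le_mul_of_nonneg_left m3 (abs_nonneg e)
    simp only [rhs]
    rw [← hX, ← hY, ← hZ]
    linarith

/-- The Morawetz estimate at scale `R`. -/
lemma morawetz (S : Sol V a b f₁ f₂ e τ) {γ η δ : ℝ} (R : ℝ) (hγ : 0 < γ) (hη : 0 < η)
    (hδ : 0 < δ) (hδ1 : δ ≤ 1) (hδγ : δ ≤ γ / 2) (hδη : δ ≤ η / 2)
    (hW : ∀ x, x ≠ 0 → γ * V x + eul V x ≤ (1 - η) * ((d:ℝ) - 1) * ((d:ℝ) - 3) / (2 * ‖x‖ ^ 2)) :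
    ∫⁻ x, ENNReal.ofReal (1 / 2 * δ * (R ^ 2 * (√(R ^ 2 + ‖x‖ ^ 2))⁻¹ ^ 3) *
          ((gr2 a x + gr2 b x) + τ * (a x ^ 2 + b x ^ 2))
        + γ / 4 * (V x * (a x ^ 2 + b x ^ 2) / ‖x‖)
        + η * ((d:ℝ) - 1) * ((d:ℝ) - 3) / 8 * ((a x ^ 2 + b x ^ 2) / ‖x‖ ^ 3)) ≤
      ∫⁻ x, ENNReal.ofReal (rhs a b f₁ f₂ e x) := by
  have hd' : (3:ℝ) < d := by exact_mod_cast S.hd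
  set A : Ed d → ℝ := fun x =>
    - kern δ R 3 x * (eul a x ^ 2 + eul b x ^ 2)
      + 1 / 2 * (gr2 a x + gr2 b x) * (kern δ R 1 x + kern δ R 3 x * ‖x‖ ^ 2)
      - 1 / 2 * (kern δ R 1 x - kern δ R 3 x * ‖x‖ ^ 2) * (V x - τ) * (a x ^ 2 + b x ^ 2)
      - 1 / 2 * eul V x * kern δ R 1 x * (a x ^ 2 + b x ^ 2)
      + 1 / 4 * ((d:ℝ) - 1) * (d * kern δ R 3 x - 3 * kern δ R 5 x * ‖x‖ ^ 2)
        * (a x ^ 2 + b x ^ 2) with hAdef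
  have hA : ∀ x, x ≠ 0 → 1 / 2 * δ * (R ^ 2 * (√(R ^ 2 + ‖x‖ ^ 2))⁻¹ ^ 3) *
          ((gr2 a x + gr2 b x) + τ * (a x ^ 2 + b x ^ 2))
        + γ / 4 * (V x * (a x ^ 2 + b x ^ 2) / ‖x‖)
        + η * ((d:ℝ) - 1) * ((d:ℝ) - 3) / 8 * ((a x ^ 2 + b x ^ 2) / ‖x‖ ^ 3) ≤ A x := by
    intro x hx
    have hxp : 0 < ‖x‖ := norm_pos_iff.2 hx
    obtain ⟨w1, w2, w3⟩ := weight_facts (R := R) hxp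
    have := morawetz_pos (τ := τ) (g := gr2 a x + gr2 b x) (w := a x ^ 2 + b x ^ 2)
      (e := eul a x ^ 2 + eul b x ^ 2) hd' hγ hη hδ hδγ hδη hxp (S.hV0 x) (by positivity)
      (by linarith [eul_sq_le a x, eul_sq_le b x]) rfl w1 w2 w3 (hW x hx)
    simp only [hAdef, kern_eq]
    refine le_trans (le_of_eq ?_) this
    rw [inv_pow ‖x‖]
    simp only [div_eq_mul_inv]
  have hdiv := divergence_ineq (by have := S.hd; omega)
    (fun i x => flux δ R τ V a i x + flux δ R τ V b i x)
    (fun i => (contDiffOn_flux S.hV S.ha i).add (contDiffOn_flux S.hV S.hb i))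
    (fun i => S.morawetz_flux_int R hδ hδ1 i) A (src δ R a b f₁ f₂ e) ?_ (S.int_src R hδ hδ1) ?_
  · refine le_trans ?_ (hdiv.trans (ofReal_integral_le ?_))
    · refine lintegral_mono_ae ?_
      filter_upwards [ae_ne_zero S.hd] with x hx using ENNReal.ofReal_le_ofReal (hA x hx)
    · filter_upwards [ae_ne_zero S.hd] with x hx using
        (le_abs_self _).trans (abs_src_le S.hd R hδ hδ1 hx)
  · intro x hx
    refine le_trans ?_ (hA x hx)
    have := S.hV0 x
    have := gr2_nonneg a x
    have := gr2_nonneg b x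
    have := S.hτ
    have : (0:ℝ) ≤ (d:ℝ) - 1 := by linarith
    have : (0:ℝ) ≤ (d:ℝ) - 3 := by linarith
    positivity
  · intro x hx
    have hnhds : {(0 : Ed d)}ᶜ ∈ 𝓝 x := isOpen_compl_singleton.mem_nhds hx
    change ∑ i, pr (fun x => flux δ R τ V a i x + flux δ R τ V b i x) i x = _
    have : ∀ i, pr (fun x => flux δ R τ V a i x + flux δ R τ V b i x) i x =
        pr (flux δ R τ V a i) i x + pr (flux δ R τ V b i) i x := fun i =>
      pr_add (((contDiffOn_flux S.hV S.ha i).contDiffAt hnhds).differentiableAt one_ne_zero)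
        (((contDiffOn_flux S.hV S.hb i).contDiffAt hnhds).differentiableAt one_ne_zero) i
    simp_rw [this]
    rw [Finset.sum_add_distrib, div_flux S.hV S.ha hx, div_flux S.hV S.hb hx, S.eq₁, S.eq₂]
    simp only [hAdef, src]
    ring
end Sol

/-! ### Morrey–Campanato duality and absorption -/

section
variable {d : ℕ}

lemma lintegral_ball_le (g : Ed d → ℝ≥0∞) {R : ℝ} (hR : 0 < R) :
    ∫⁻ x in ball (0 : Ed d) R, g x ≤ ENNReal.ofReal R * nX2 g := by
  rw [← ENNReal.inv_mul_le_iff (by simpa using hR) ofReal_ne_top]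
  exact le_iSup₂_of_le (f := fun (R : ℝ) (_ : 0 < R) =>
    (ENNReal.ofReal R)⁻¹ * ∫⁻ x in ball (0 : Ed d) R, g x) R hR le_rfl

lemma mul_nX2_le {c K : ℝ≥0∞} {g : Ed d → ℝ≥0∞}
    (h : ∀ R : ℝ, 0 < R → c * ∫⁻ x in ball (0 : Ed d) R, g x ≤ ENNReal.ofReal R * K) :
    c * nX2 g ≤ K := by
  unfold nX2
  simp only [ENNReal.mul_iSup]
  refine iSup₂_le fun R hR => ?_
  rw [mul_left_comm, ENNReal.inv_mul_le_iff (by simpa using hR) ofReal_ne_top]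
  exact h R hR

/-- `sup_R R⁻¹ ∫_{B_R} g ≤ ∫ g / |x|`, in a form that avoids dividing. -/
lemma nX2_le_lintegral {g h : Ed d → ℝ≥0∞}
    (H : ∀ᵐ x : Ed d, g x ≤ ENNReal.ofReal ‖x‖ * h x) : nX2 g ≤ ∫⁻ x, h x := by
  rw [← one_mul (nX2 g)]
  refine mul_nX2_le fun R hR => ?_
  rw [one_mul]
  calc ∫⁻ x in ball (0 : Ed d) R, g x ≤ ∫⁻ x in ball (0 : Ed d) R, ENNReal.ofReal R * h x := by
        refine lintegral_mono_ae ((ae_restrict_iff' measurableSet_ball).2 ?_)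
        filter_upwards [H] with x hx hb
        refine hx.trans ?_
        gcongr
        have : ‖x‖ < R := by simpa using hb
        exact this.le
    _ = ENNReal.ofReal R * ∫⁻ x in ball (0 : Ed d) R, h x := lintegral_const_mul' _ _ ofReal_ne_top
    _ ≤ _ := by gcongr; exact Measure.restrict_le_self

lemma iUnion_shell : {(0 : Ed d)}ᶜ ⊆ ⋃ j : ℤ, shell d j := by
  intro x hx
  obtain ⟨n, hn⟩ := exists_mem_Ioc_zpow (norm_pos_iff.2 hx) (one_lt_two (α := ℝ))
  exact mem_iUnion.2 ⟨n, hn⟩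

/-- Duality between the Morrey–Campanato norm and `nXstar`: Cauchy–Schwarz on every dyadic
shell. -/
lemma lintegral_mul_le_nXstar (hd : 3 < d) {φ h : Ed d → ℝ≥0∞} (hφ : AEMeasurable φ)
    (hh : AEMeasurable h) {M : ℝ≥0∞}
    (hM : ∀ j : ℤ, ∫⁻ x in shell d j, h x ^ 2 ≤ ENNReal.ofReal ((2:ℝ) ^ (j + 1)) * M) :
    ∫⁻ x, φ x * h x ≤ nXstar (fun x => φ x ^ 2) * M ^ (1 / 2 : ℝ) := by
  have h0 : ∫⁻ x, φ x * h x ≤ ∫⁻ x in ⋃ j : ℤ, shell d j, φ x * h x := by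
    rw [Measure.restrict_eq_self_of_ae_mem]
    filter_upwards [ae_ne_zero hd] with x hx using iUnion_shell hx
  refine h0.trans ((lintegral_iUnion_le _ _).trans ?_)
  unfold nXstar
  rw [← ENNReal.tsum_mul_right]
  refine ENNReal.tsum_le_tsum fun j => ?_
  have hcs := ENNReal.lintegral_mul_le_Lp_mul_Lq (volume.restrict (shell d j))
    (Real.HolderConjugate.two_two) hφ.restrict hh.restrict
  refine hcs.trans ?_
  simp only [ENNReal.rpow_two]
  rw [ENNReal.mul_rpow_of_nonneg _ _ (by norm_num : (0:ℝ) ≤ 1 / 2)]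
  calc _ ≤ (∫⁻ x in shell d j, φ x ^ 2) ^ (1 / 2 : ℝ) *
        (ENNReal.ofReal ((2:ℝ) ^ (j + 1)) * M) ^ (1 / 2 : ℝ) := by gcongr; exact hM j
    _ = _ := by
      rw [ENNReal.mul_rpow_of_nonneg _ _ (by norm_num : (0:ℝ) ≤ 1 / 2)]; ring

lemma lintegral_shell_le (g : Ed d → ℝ≥0∞) (j : ℤ) :
    ∫⁻ x in shell d j, g x ≤ ENNReal.ofReal ((2:ℝ) ^ (j + 1)) * (2 * nX2 g) := by
  have h2 : (0:ℝ) < 2 ^ (j + 1) := by positivity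
  calc ∫⁻ x in shell d j, g x ≤ ∫⁻ x in ball (0 : Ed d) (2 ^ (j + 1) * 2), g x := by
        refine lintegral_mono_set fun x hx => ?_
        have := hx.2
        simp only [mem_ball, dist_zero_right]
        linarith
    _ ≤ ENNReal.ofReal (2 ^ (j + 1) * 2) * nX2 g := lintegral_ball_le g (by positivity)
    _ = _ := by rw [ENNReal.ofReal_mul h2.le]; simp [mul_assoc]

/-- The pairing of `X` with `X*`. -/
lemma lintegral_mul_le_nX2 (hd : 3 < d) {φ h : Ed d → ℝ≥0∞} (hφ : AEMeasurable φ)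
    (hh : AEMeasurable h) :
    ∫⁻ x, φ x * h x ≤ nXstar (fun x => φ x ^ 2) * (2 * nX2 fun x => h x ^ 2) ^ (1 / 2 : ℝ) :=
  lintegral_mul_le_nXstar hd hφ hh fun j => lintegral_shell_le _ j

/-- The closing argument: with every main term bounded by `T = k Q`, Young's inequality absorbs
`T` and leaves the factor `1 / 2` in front of `|ε| ‖u‖²_X`. -/
lemma absorb {k c m F D P Z N Q I₁ I₂ I₃ : ℝ} (hk : 0 < k) (hc : 0 < c) (hm : 1 ≤ m)
    (hQ : 0 ≤ Q) (hN : 0 ≤ N) (hD : D ≤ k * Q) (hP : P ≤ k * Q)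
    (hZ : Z ≤ k * Q)
    (hQI : Q ≤ 2 * (I₁ + c * I₂ + I₃)) (h₁ : I₁ ^ 2 ≤ F ^ 2 * (2 * D)) (h₂ : I₂ ^ 2 ≤ F ^ 2 * Z)
    (h₃ : I₃ ^ 2 ≤ F ^ 2 * (2 * (P + N))) :
    m * (k * Q) ≤ 16 * k ^ 2 * m ^ 2 * (2 + c) ^ 2 * F ^ 2 + 1 / 2 * N := by
  set T := k * Q with hT
  have hT0 : 0 ≤ T := by positivity
  obtain ⟨l, hl⟩ : ∃ l, l = (8 * k * m * (2 + c))⁻¹ := ⟨_, rfl⟩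
  have hl0 : 0 < l := by rw [hl]; positivity
  have hl1 : 8 * k * m * (2 + c) * l = 1 := by rw [hl]; field_simp
  have am : ∀ {I s X : ℝ}, 0 ≤ X → I ^ 2 ≤ F ^ 2 * s → s ≤ 2 * X →
      I ≤ l * X + F ^ 2 / (2 * l) := by
    intro I s X hX hI hsX
    refine le_of_sq_le_sq ?_ (by positivity)
    have h5 : l * X * (F ^ 2 / (2 * l)) = X * F ^ 2 / 2 := by field_simp
    nlinarith [sq_nonneg (l * X - F ^ 2 / (2 * l)), mul_le_mul_of_nonneg_left hsX (sq_nonneg F)]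
  have a₁ := am hT0 h₁ (by linarith)
  have a₂ := am hT0 h₂ (by linarith)
  have a₃ := am (by linarith : 0 ≤ T + N) h₃ (by linarith)
  have hF2 : F ^ 2 / (2 * l) = 4 * k * m * (2 + c) * F ^ 2 := by
    rw [div_eq_iff (by positivity)]
    linear_combination (-F ^ 2) * hl1
  rw [hF2] at a₁ a₂ a₃
  have b₂ := mul_le_mul_of_nonneg_left a₂ hc.le
  have hQ' : Q ≤ 2 * ((2 + c) * l * T + l * N + 4 * k * m * (2 + c) ^ 2 * F ^ 2) := by
    linarith
  have hmk : 0 < m * k := by positivity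
  have hT' := mul_le_mul_of_nonneg_left hQ' hmk.le
  have e1 : m * k * (2 * ((2 + c) * l * T + l * N + 4 * k * m * (2 + c) ^ 2 * F ^ 2)) =
      T / 4 + 2 * (m * k * l) * N + 8 * k ^ 2 * m ^ 2 * (2 + c) ^ 2 * F ^ 2 := by
    linear_combination (T / 4) * hl1
  have e2 : m * k * l ≤ 1 / 16 := by
    have : 0 < m * k * l := by positivity
    nlinarith
  have e3 := mul_le_mul_of_nonneg_right e2 hN
  have e4 : T ≤ m * T := le_mul_of_one_le_left hT0 hm
  have e5 : 0 ≤ k ^ 2 * m ^ 2 * (2 + c) ^ 2 * F ^ 2 := by positivity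
  have e6 : m * k * Q = m * T := by rw [hT]; ring
  linarith

lemma sq_le_of_le_mul_rpow {I F X : ℝ≥0∞} (h : I ≤ F * X ^ (1 / 2 : ℝ)) : I ^ 2 ≤ F ^ 2 * X := by
  calc I ^ 2 ≤ (F * X ^ (1 / 2 : ℝ)) ^ 2 := by gcongr
    _ = F ^ 2 * X := by
      rw [mul_pow, ← ENNReal.rpow_natCast (X ^ (1 / 2 : ℝ)), ← ENNReal.rpow_mul]; norm_num

/-- `absorb` in `ℝ≥0∞`; the finiteness hypotheses are what makes absorption legitimate. -/
lemma absorb_ennreal {k c m : ℝ} {F D P Z N Q I₁ I₂ I₃ : ℝ≥0∞} (hk : 0 < k) (hc : 0 < c)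
    (hm : 1 ≤ m) (hFt : F ≠ ⊤) (hDt : D ≠ ⊤) (hPt : P ≠ ⊤) (hZt : Z ≠ ⊤) (hNt : N ≠ ⊤)
    (hD : D ≤ ENNReal.ofReal k * Q) (hP : P ≤ ENNReal.ofReal k * Q)
    (hZ : Z ≤ ENNReal.ofReal k * Q)
    (hQI : Q ≤ 2 * (I₁ + ENNReal.ofReal c * I₂ + I₃)) (h₁ : I₁ ^ 2 ≤ F ^ 2 * (2 * D))
    (h₂ : I₂ ^ 2 ≤ F ^ 2 * Z) (h₃ : I₃ ^ 2 ≤ F ^ 2 * (2 * (P + N))) :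
    ENNReal.ofReal m * (ENNReal.ofReal k * Q) ≤
      ENNReal.ofReal (16 * k ^ 2 * m ^ 2 * (2 + c) ^ 2) * F ^ 2 + ENNReal.ofReal (1 / 2) * N := by
  have fin : ∀ {I X : ℝ≥0∞}, X ≠ ⊤ → I ^ 2 ≤ F ^ 2 * X → I ≠ ⊤ := by
    rintro I X hX h rfl
    rw [ENNReal.top_pow two_ne_zero, top_le_iff] at h
    exact ENNReal.mul_ne_top (ENNReal.pow_ne_top hFt) hX h
  have t₁ := fin (ENNReal.mul_ne_top ENNReal.ofNat_ne_top hDt) h₁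
  have t₂ := fin hZt h₂
  have t₃ := fin (ENNReal.mul_ne_top ENNReal.ofNat_ne_top (ENNReal.add_ne_top.2 ⟨hPt, hNt⟩)) h₃
  have tc : ENNReal.ofReal c * I₂ ≠ ⊤ := ENNReal.mul_ne_top ofReal_ne_top t₂
  have tq : 2 * (I₁ + ENNReal.ofReal c * I₂ + I₃) ≠ ⊤ :=
    ENNReal.mul_ne_top ENNReal.ofNat_ne_top (by simp [t₁, tc, t₃])
  have tQ : Q ≠ ⊤ := ne_top_of_le_ne_top tq hQI
  have tkQ : ENNReal.ofReal k * Q ≠ ⊤ := ENNReal.mul_ne_top ofReal_ne_top tQ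
  have key := absorb (k := k) (c := c) (m := m) (F := F.toReal) (D := D.toReal) (P := P.toReal)
    (Z := Z.toReal) (N := N.toReal) (Q := Q.toReal) (I₁ := I₁.toReal) (I₂ := I₂.toReal)
    (I₃ := I₃.toReal) hk hc hm toReal_nonneg toReal_nonneg
    (by simpa [hk.le] using ENNReal.toReal_mono tkQ hD)
    (by simpa [hk.le] using ENNReal.toReal_mono tkQ hP)
    (by simpa [hk.le] using ENNReal.toReal_mono tkQ hZ)
    (by
      have := ENNReal.toReal_mono tq hQI
      rwa [ENNReal.toReal_mul, ENNReal.toReal_add (by simp [t₁, tc]) t₃,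
        ENNReal.toReal_add t₁ tc, ENNReal.toReal_mul, ENNReal.toReal_ofReal hc.le] at this)
    (by simpa using ENNReal.toReal_mono (by finiteness) h₁)
    (by simpa using ENNReal.toReal_mono (by finiteness) h₂)
    (by
      have := ENNReal.toReal_mono (by finiteness) h₃
      simpa [ENNReal.toReal_add hPt hNt] using this)
  have hm0 : 0 ≤ m := by linarith
  rw [← ENNReal.toReal_le_toReal (by finiteness) (by finiteness),
    ENNReal.toReal_add (by finiteness) (by finiteness)]
  simp only [ENNReal.toReal_mul, ENNReal.toReal_pow]
  rw [ENNReal.toReal_ofReal hm0, ENNReal.toReal_ofReal hk.le, ENNReal.toReal_ofReal (by positivity),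
    ENNReal.toReal_ofReal (by norm_num)]
  exact key
end

/-! ### Bounds for the main terms -/

/-- On the ball of radius `R` the second weight is comparable with `1 / R`. -/
lemma weight_lower {R r : ℝ} (hR : 0 < R) (hr : 0 ≤ r) (hrR : r ≤ R) :
    1 ≤ 3 * R * (R ^ 2 * (√(R ^ 2 + r ^ 2))⁻¹ ^ 3) := by
  have hs : 0 < √(R ^ 2 + r ^ 2) := Real.sqrt_pos.2 (by positivity)
  have h2 : √(R ^ 2 + r ^ 2) ^ 2 = R ^ 2 + r ^ 2 := Real.sq_sqrt (by positivity)
  set s := √(R ^ 2 + r ^ 2)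
  have h3 : s ≤ 3 / 2 * R := by
    refine le_of_sq_le_sq ?_ (by positivity)
    nlinarith
  have h4 : s ^ 3 ≤ 3 * R ^ 3 := by
    have : s ^ 2 ≤ 2 * R ^ 2 := by nlinarith
    calc s ^ 3 = s ^ 2 * s := by ring
      _ ≤ 2 * R ^ 2 * (3 / 2 * R) := by gcongr
      _ = _ := by ring
  rw [inv_pow, show 3 * R * (R ^ 2 * (s ^ 3)⁻¹) = 3 * R ^ 3 / s ^ 3 by ring,
    le_div_iff₀ (by positivity)]
  linarith

namespace Sol
variable {d : ℕ} {V a b f₁ f₂ : Ed d → ℝ} {e τ : ℝ}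

/-- The Morawetz estimate bounds each of the four main terms by the right-hand side. -/
lemma main_terms (S : Sol V a b f₁ f₂ e τ) {γ η δ k : ℝ} (hγ : 0 < γ) (hη : 0 < η)
    (hδ : 0 < δ) (hδ1 : δ ≤ 1) (hδγ : δ ≤ γ / 2) (hδη : δ ≤ η / 2)
    (hk : k = 6 / δ + 4 / γ + 8 / (η * ((d:ℝ) - 1) * ((d:ℝ) - 3)))
    (hW : ∀ x, x ≠ 0 → γ * V x + eul V x ≤ (1 - η) * ((d:ℝ) - 1) * ((d:ℝ) - 3) / (2 * ‖x‖ ^ 2)) :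
    nX2 (fun x => ENNReal.ofReal (gr2 a x + gr2 b x)) ≤
        ENNReal.ofReal k * ∫⁻ x, ENNReal.ofReal (rhs a b f₁ f₂ e x) ∧
    ENNReal.ofReal τ * nX2 (fun x => ENNReal.ofReal (a x ^ 2 + b x ^ 2)) ≤
        ENNReal.ofReal k * ∫⁻ x, ENNReal.ofReal (rhs a b f₁ f₂ e x) ∧
    ∫⁻ x, ENNReal.ofReal (V x * (a x ^ 2 + b x ^ 2) / ‖x‖) ≤
        ENNReal.ofReal k * ∫⁻ x, ENNReal.ofReal (rhs a b f₁ f₂ e x) ∧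
    ∫⁻ x, ENNReal.ofReal ((a x ^ 2 + b x ^ 2) / ‖x‖ ^ 3) ≤
        ENNReal.ofReal k * ∫⁻ x, ENNReal.ofReal (rhs a b f₁ f₂ e x) := by
  have hd' : (3:ℝ) < d := by exact_mod_cast S.hd
  have hβ : 0 < η * ((d:ℝ) - 1) * ((d:ℝ) - 3) := by
    have : (0:ℝ) < (d:ℝ) - 1 := by linarith
    have : (0:ℝ) < (d:ℝ) - 3 := by linarith
    positivity
  set β := η * ((d:ℝ) - 1) * ((d:ℝ) - 3) with hβdef
  have hk0 : 0 < k := by rw [hk]; positivity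
  have k1 : 6 ≤ k * δ := by
    rw [hk]
    have h1 : 6 / δ * δ = 6 := by field_simp
    have h2 : 0 ≤ 4 / γ * δ := by positivity
    have h3 : 0 ≤ 8 / β * δ := by positivity
    linarith
  have k2 : 4 ≤ k * γ := by
    rw [hk]
    have h1 : 0 ≤ 6 / δ * γ := by positivity
    have h2 : 4 / γ * γ = 4 := by field_simp
    have h3 : 0 ≤ 8 / β * γ := by positivity
    linarith
  have k3 : 8 ≤ k * β := by
    rw [hk]
    have h1 : 0 ≤ 6 / δ * β := by positivity
    have h2 : 0 ≤ 4 / γ * β := by positivity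
    have h3 : 8 / β * β = 8 := by field_simp
    linarith
  have hM := fun R => S.morawetz R hγ hη hδ hδ1 hδγ hδη hW
  have hg0 : ∀ x, 0 ≤ gr2 a x + gr2 b x := fun x => add_nonneg (gr2_nonneg _ _) (gr2_nonneg _ _)
  have hV0 := S.hV0
  have hτ := S.hτ
  -- comparison of an integral over `s` with the left-hand side of the Morawetz estimate
  have cmp : ∀ (R κ : ℝ) (s : Set (Ed d)) (h : Ed d → ℝ), MeasurableSet s → 0 ≤ κ →
      (∀ x ∈ s, h x ≤ κ * (1 / 2 * δ * (R ^ 2 * (√(R ^ 2 + ‖x‖ ^ 2))⁻¹ ^ 3) *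
          ((gr2 a x + gr2 b x) + τ * (a x ^ 2 + b x ^ 2))
        + γ / 4 * (V x * (a x ^ 2 + b x ^ 2) / ‖x‖)
        + β / 8 * ((a x ^ 2 + b x ^ 2) / ‖x‖ ^ 3))) →
      ∫⁻ x in s, ENNReal.ofReal (h x) ≤
        ENNReal.ofReal κ * ∫⁻ x, ENNReal.ofReal (rhs a b f₁ f₂ e x) := by
    intro R κ s h hs hκ hle
    refine le_trans ?_ (mul_le_mul_right (hM R) _)
    rw [← lintegral_const_mul' _ _ ofReal_ne_top]
    refine le_trans (setLIntegral_mono_ae' hs (ae_of_all _ fun x hx => ?_)) (setLIntegral_le_lintegral s _)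
    rw [← ENNReal.ofReal_mul hκ]
    exact ENNReal.ofReal_le_ofReal (hle x hx)
  have ballcmp : ∀ (R : ℝ), 0 < R → ∀ x ∈ ball (0 : Ed d) R,
      (gr2 a x + gr2 b x) + τ * (a x ^ 2 + b x ^ 2) ≤
      R * k * (1 / 2 * δ * (R ^ 2 * (√(R ^ 2 + ‖x‖ ^ 2))⁻¹ ^ 3) *
          ((gr2 a x + gr2 b x) + τ * (a x ^ 2 + b x ^ 2))
        + γ / 4 * (V x * (a x ^ 2 + b x ^ 2) / ‖x‖)
        + β / 8 * ((a x ^ 2 + b x ^ 2) / ‖x‖ ^ 3)) := by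
    intro R hR x hx
    have hxR : ‖x‖ ≤ R := by
      have : ‖x‖ < R := by simpa using hx
      exact this.le
    have hw := weight_lower hR (norm_nonneg x) hxR
    set q := R ^ 2 * (√(R ^ 2 + ‖x‖ ^ 2))⁻¹ ^ 3
    have hq : 0 ≤ q := by positivity
    have hX : 0 ≤ (gr2 a x + gr2 b x) + τ * (a x ^ 2 + b x ^ 2) := by
      have := hg0 x; positivity
    have hVx := hV0 x
    have h1 : 0 ≤ R * k * (γ / 4 * (V x * (a x ^ 2 + b x ^ 2) / ‖x‖)) := by positivity
    have h2 : 0 ≤ R * k * (β / 8 * ((a x ^ 2 + b x ^ 2) / ‖x‖ ^ 3)) := by positivity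
    have h3 : 1 ≤ R * k * (1 / 2 * δ * q) := by
      have := mul_le_mul_of_nonneg_right k1 (by positivity : 0 ≤ R * q)
      nlinarith
    have h4 := mul_le_mul_of_nonneg_right h3 hX
    linarith
  refine ⟨?_, ?_, ?_, ?_⟩
  · rw [← one_mul (nX2 _)]
    refine mul_nX2_le fun R hR => ?_
    rw [one_mul, ← mul_assoc, ← ENNReal.ofReal_mul hR.le]
    refine cmp R _ _ _ measurableSet_ball (by positivity) fun x hx => le_trans ?_ (ballcmp R hR x hx)
    have : 0 ≤ τ * (a x ^ 2 + b x ^ 2) := by positivity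
    linarith
  · refine mul_nX2_le fun R hR => ?_
    rw [← mul_assoc, ← ENNReal.ofReal_mul hR.le, ← lintegral_const_mul' _ _ ofReal_ne_top]
    simp_rw [← ENNReal.ofReal_mul hτ]
    refine cmp R _ _ _ measurableSet_ball (by positivity) fun x hx => le_trans ?_ (ballcmp R hR x hx)
    linarith [hg0 x]
  · rw [← setLIntegral_univ]
    refine cmp 0 _ _ _ MeasurableSet.univ hk0.le fun x _ => ?_
    have hVx := hV0 x
    have h1 : 0 ≤ V x * (a x ^ 2 + b x ^ 2) / ‖x‖ := by positivity
    have h2 : 0 ≤ k * (β / 8 * ((a x ^ 2 + b x ^ 2) / ‖x‖ ^ 3)) := by positivity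
    have h4 := mul_le_mul_of_nonneg_right k2 h1
    simp only [ne_eq, OfNat.ofNat_ne_zero, not_false_eq_true, zero_pow, zero_mul, mul_zero]
    linarith
  · rw [← setLIntegral_univ]
    refine cmp 0 _ _ _ MeasurableSet.univ hk0.le fun x _ => ?_
    have hVx := hV0 x
    have h1 : 0 ≤ (a x ^ 2 + b x ^ 2) / ‖x‖ ^ 3 := by positivity
    have h2 : 0 ≤ k * (γ / 4 * (V x * (a x ^ 2 + b x ^ 2) / ‖x‖)) := by positivity
    have h4 := mul_le_mul_of_nonneg_right k3 h1
    simp only [ne_eq, OfNat.ofNat_ne_zero, not_false_eq_true, zero_pow, zero_mul, mul_zero]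
    linarith

lemma meas_f (S : Sol V a b f₁ f₂ e τ) :
    AEMeasurable fun x => ENNReal.ofReal √(f₁ x ^ 2 + f₂ x ^ 2) := by
  have h1 := (aesm_of_continuousOn S.hd S.contf₁).aemeasurable
  have h2 := (aesm_of_continuousOn S.hd S.contf₂).aemeasurable
  fun_prop

lemma meas_w (S : Sol V a b f₁ f₂ e τ) :
    AEMeasurable fun x => ENNReal.ofReal √(a x ^ 2 + b x ^ 2) :=
  S.contw.measurable.sqrt.ennreal_ofReal.aemeasurable

lemma meas_g (S : Sol V a b f₁ f₂ e τ) :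
    AEMeasurable fun x => ENNReal.ofReal √(gr2 a x + gr2 b x) :=
  S.contg.measurable.sqrt.ennreal_ofReal.aemeasurable

lemma ofReal_sqrt_sq {t : ℝ} (ht : 0 ≤ t) : ENNReal.ofReal √t ^ 2 = ENNReal.ofReal t := by
  rw [← ENNReal.ofReal_pow (Real.sqrt_nonneg _), Real.sq_sqrt ht]

lemma meas_w1 (S : Sol V a b f₁ f₂ e τ) :
    AEMeasurable fun x => ENNReal.ofReal (√(a x ^ 2 + b x ^ 2) / ‖x‖) :=
  (S.contw.measurable.sqrt.div measurable_norm).ennreal_ofReal.aemeasurable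

lemma rhs_eq (S : Sol V a b f₁ f₂ e τ) : ∫⁻ x, ENNReal.ofReal (rhs a b f₁ f₂ e x) =
    2 * ((∫⁻ x, ENNReal.ofReal √(f₁ x ^ 2 + f₂ x ^ 2) * ENNReal.ofReal √(gr2 a x + gr2 b x))
      + ENNReal.ofReal (((d:ℝ) - 1) / 2) * (∫⁻ x, ENNReal.ofReal √(f₁ x ^ 2 + f₂ x ^ 2) *
          ENNReal.ofReal (√(a x ^ 2 + b x ^ 2) / ‖x‖))
      + ENNReal.ofReal |e| * ∫⁻ x, ENNReal.ofReal √(a x ^ 2 + b x ^ 2) *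
          ENNReal.ofReal √(gr2 a x + gr2 b x)) := by
  have hd' : (3:ℝ) < d := by exact_mod_cast S.hd
  have hc : (0:ℝ) ≤ ((d:ℝ) - 1) / 2 := by linarith
  have hf := S.meas_f
  have hw := S.meas_w
  have hg := S.meas_g
  rw [← lintegral_const_mul' _ _ ofReal_ne_top, ← lintegral_const_mul' _ _ ofReal_ne_top,
    ← lintegral_add_left' (hf.fun_mul hg), ← lintegral_add_right' _ ((hw.fun_mul hg).const_mul _),
    ← lintegral_const_mul' _ _ ENNReal.ofNat_ne_top]
  refine lintegral_congr fun x => ?_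
  unfold rhs
  rw [ENNReal.ofReal_mul zero_le_two, ENNReal.ofReal_add (by positivity) (by positivity),
    ENNReal.ofReal_add (by positivity) (by positivity), ENNReal.ofReal_mul (by positivity),
    ENNReal.ofReal_mul hc, ENNReal.ofReal_mul (by positivity), ENNReal.ofReal_mul (abs_nonneg e),
    ENNReal.ofReal_mul (by positivity)]
  simp

/-- The charge estimate `|ε| ∫ |u|² ≤ ∫ |f| |u|`. -/
lemma charge_le (S : Sol V a b f₁ f₂ e τ) (he : e ≠ 0) :
    ENNReal.ofReal |e| * ∫⁻ x, ENNReal.ofReal (a x ^ 2 + b x ^ 2) ≤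
      ∫⁻ x, ENNReal.ofReal √(f₁ x ^ 2 + f₂ x ^ 2) * ENNReal.ofReal √(a x ^ 2 + b x ^ 2) := by
  have he' : 0 < |e| := abs_pos.2 he
  have h := S.charge.trans (ofReal_integral_le (G := fun x =>
    |e| * (√(f₁ x ^ 2 + f₂ x ^ 2) * √(a x ^ 2 + b x ^ 2))) (ae_of_all _ fun x => ?_))
  · simp_rw [← sq_abs e, sq |e|, mul_assoc |e|, ENNReal.ofReal_mul (abs_nonneg e),
      ENNReal.ofReal_mul (Real.sqrt_nonneg _)] at h
    rw [lintegral_const_mul' _ _ ofReal_ne_top, lintegral_const_mul' _ _ ofReal_ne_top,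
      lintegral_const_mul' _ _ ofReal_ne_top,
      ENNReal.mul_le_mul_iff_right (by simpa using he) ofReal_ne_top] at h
    exact h
  · refine (le_abs_self _).trans ?_
    rw [abs_mul]
    refine mul_le_mul_of_nonneg_left ?_ (abs_nonneg _)
    rw [add_comm (f₁ x ^ 2), abs_le']
    constructor
    · have := dot_le_sqrt (f₂ x) (a x) (-f₁ x) (b x)
      simp only [neg_sq] at this; linarith
    · have := dot_le_sqrt (-f₂ x) (a x) (f₁ x) (b x)
      simp only [neg_sq] at this; linarith

/-- The energy estimate `∫ |∇u|² ≤ τ ∫ |u|² + ∫ |f| |u|`. -/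
lemma energy_le (S : Sol V a b f₁ f₂ e τ) :
    ∫⁻ x, ENNReal.ofReal (gr2 a x + gr2 b x) ≤
      ENNReal.ofReal τ * (∫⁻ x, ENNReal.ofReal (a x ^ 2 + b x ^ 2)) +
      ∫⁻ x, ENNReal.ofReal √(f₁ x ^ 2 + f₂ x ^ 2) * ENNReal.ofReal √(a x ^ 2 + b x ^ 2) := by
  have h := S.energy.trans (ofReal_integral_le (G := fun x =>
    τ * (a x ^ 2 + b x ^ 2) + √(f₁ x ^ 2 + f₂ x ^ 2) * √(a x ^ 2 + b x ^ 2))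
      (ae_of_all _ fun x => ?_))
  · rw [← lintegral_const_mul' _ _ ofReal_ne_top, ← lintegral_add_right' _ (S.meas_f.fun_mul S.meas_w)]
    refine le_trans (lintegral_mono fun x => ENNReal.ofReal_le_ofReal ?_)
      (h.trans (le_of_eq (lintegral_congr fun x => ?_)))
    · have := mul_nonneg (S.hV0 x) (by positivity : 0 ≤ a x ^ 2 + b x ^ 2)
      linarith
    · rw [ENNReal.ofReal_add (mul_nonneg S.hτ (by positivity)) (by positivity),
        ENNReal.ofReal_mul S.hτ, ENNReal.ofReal_mul (Real.sqrt_nonneg _)]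
  · linarith [dot_le_sqrt (f₁ x) (a x) (f₂ x) (b x)]
end Sol

/-! ### The cross term and the estimate for the real system -/

namespace Sol
variable {d : ℕ} {V a b f₁ f₂ : Ed d → ℝ} {e τ : ℝ}

/-- The term `|ε| ∫ |u| |∇u|`, estimated by the energy and charge estimates. -/
lemma cross_le (S : Sol V a b f₁ f₂ e τ) (he : e ≠ 0) :
    (ENNReal.ofReal |e| * ∫⁻ x, ENNReal.ofReal √(a x ^ 2 + b x ^ 2) *
      ENNReal.ofReal √(gr2 a x + gr2 b x)) ^ 2 ≤
    (nXstar fun x => ENNReal.ofReal (f₁ x ^ 2 + f₂ x ^ 2)) ^ 2 *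
      (2 * (ENNReal.ofReal τ * nX2 (fun x => ENNReal.ofReal (a x ^ 2 + b x ^ 2)) +
        ENNReal.ofReal |e| * nX2 (fun x => ENNReal.ofReal (a x ^ 2 + b x ^ 2)))) := by
  have hg0 : ∀ x, 0 ≤ gr2 a x + gr2 b x := fun x => add_nonneg (gr2_nonneg _ _) (gr2_nonneg _ _)
  have h1 := S.charge_le he
  have h2 := S.energy_le
  have h3 := sq_le_of_le_mul_rpow (lintegral_mul_le_nX2 S.hd S.meas_f S.meas_w)
  have h4 := ENNReal.lintegral_mul_le_Lp_mul_Lq volume Real.HolderConjugate.two_two S.meas_w S.meas_g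
  simp only [Pi.mul_apply, ENNReal.rpow_two] at h4
  have e1 : ∀ x, ENNReal.ofReal √(a x ^ 2 + b x ^ 2) ^ 2 = ENNReal.ofReal (a x ^ 2 + b x ^ 2) :=
    fun x => ofReal_sqrt_sq (by positivity)
  have e2 : ∀ x, ENNReal.ofReal √(f₁ x ^ 2 + f₂ x ^ 2) ^ 2 = ENNReal.ofReal (f₁ x ^ 2 + f₂ x ^ 2) :=
    fun x => ofReal_sqrt_sq (by positivity)
  have e3 : ∀ x, ENNReal.ofReal √(gr2 a x + gr2 b x) ^ 2 = ENNReal.ofReal (gr2 a x + gr2 b x) :=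
    fun x => ofReal_sqrt_sq (hg0 x)
  simp_rw [e1, e2] at h3
  simp_rw [e1, e3] at h4
  set Y := ∫⁻ x, ENNReal.ofReal (a x ^ 2 + b x ^ 2)
  set G := ∫⁻ x, ENNReal.ofReal (gr2 a x + gr2 b x)
  set Φ := ∫⁻ x, ENNReal.ofReal √(f₁ x ^ 2 + f₂ x ^ 2) * ENNReal.ofReal √(a x ^ 2 + b x ^ 2)
  set I := ∫⁻ x, ENNReal.ofReal √(a x ^ 2 + b x ^ 2) * ENNReal.ofReal √(gr2 a x + gr2 b x)
  set U := nX2 (fun x => ENNReal.ofReal (a x ^ 2 + b x ^ 2))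
  set F := nXstar fun x => ENNReal.ofReal (f₁ x ^ 2 + f₂ x ^ 2)
  set E := ENNReal.ofReal |e|
  set t := ENNReal.ofReal τ
  have h5 : I ^ 2 ≤ Y * G := by
    have := sq_le_of_le_mul_rpow h4
    rwa [← ENNReal.rpow_natCast (Y ^ (1 / 2 : ℝ)), ← ENNReal.rpow_mul, show
      (1 / 2 : ℝ) * ((2 : ℕ) : ℝ) = 1 by norm_num, ENNReal.rpow_one] at this
  calc (E * I) ^ 2 = E ^ 2 * I ^ 2 := mul_pow _ _ _
    _ ≤ E ^ 2 * (Y * (t * Y + Φ)) := by gcongr; exact h5.trans (by gcongr)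
    _ = t * (E * Y) ^ 2 + E * ((E * Y) * Φ) := by ring
    _ ≤ t * Φ ^ 2 + E * (Φ * Φ) := by gcongr
    _ = (t + E) * Φ ^ 2 := by ring
    _ ≤ (t + E) * (F ^ 2 * (2 * U)) := by gcongr
    _ = _ := by ring

/-- The estimate for the system satisfied by the real and imaginary parts. -/
lemma estimate (S : Sol V a b f₁ f₂ e τ) (he : e ≠ 0) {γ η δ k : ℝ} (hγ : 0 < γ) (hη : 0 < η)
    (hδ : 0 < δ) (hδ1 : δ ≤ 1) (hδγ : δ ≤ γ / 2) (hδη : δ ≤ η / 2)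
    (hk : k = 6 / δ + 4 / γ + 8 / (η * ((d:ℝ) - 1) * ((d:ℝ) - 3)))
    (hW : ∀ x, x ≠ 0 → γ * V x + eul V x ≤ (1 - η) * ((d:ℝ) - 1) * ((d:ℝ) - 3) / (2 * ‖x‖ ^ 2)) :
    nX2 (fun x => ENNReal.ofReal (gr2 a x + gr2 b x))
      + ENNReal.ofReal τ * nX2 (fun x => ENNReal.ofReal (a x ^ 2 + b x ^ 2))
      + (∫⁻ x, ENNReal.ofReal (V x / ‖x‖) * ENNReal.ofReal (a x ^ 2 + b x ^ 2))
      + (⨆ (R : ℝ) (_ : 0 < R),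
          (ENNReal.ofReal (R^3))⁻¹ * ∫⁻ x in ball (0 : Ed d) R, ENNReal.ofReal (a x ^ 2 + b x ^ 2))
      + nX2 (fun x => ENNReal.ofReal (V x) * ENNReal.ofReal (a x ^ 2 + b x ^ 2))
      + ENNReal.ofReal ((d:ℝ) - 3) *
          (∫⁻ x, ENNReal.ofReal (a x ^ 2 + b x ^ 2) / ENNReal.ofReal (‖x‖^3))
    ≤ ENNReal.ofReal (16 * k ^ 2 * ((d:ℝ) + 2) ^ 2 * (2 + ((d:ℝ) - 1) / 2) ^ 2) *
        (nXstar fun x => ENNReal.ofReal (f₁ x ^ 2 + f₂ x ^ 2)) ^ 2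
      + ENNReal.ofReal ((1/2) * |e|) * nX2 (fun x => ENNReal.ofReal (a x ^ 2 + b x ^ 2)) := by
  have hd' : (3:ℝ) < d := by exact_mod_cast S.hd
  have hd1 : (0:ℝ) < (d:ℝ) - 1 := by linarith
  have hd3 : (0:ℝ) < (d:ℝ) - 3 := by linarith
  have hk0 : 0 < k := by rw [hk]; positivity
  have hg0 : ∀ x, 0 ≤ gr2 a x + gr2 b x := fun x => add_nonneg (gr2_nonneg _ _) (gr2_nonneg _ _)
  obtain ⟨m1, m2, m3, m4⟩ := S.main_terms hγ hη hδ hδ1 hδγ hδη hk hW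
  -- the remaining terms, in terms of the four main ones
  have hWeq : (∫⁻ x, ENNReal.ofReal (V x / ‖x‖) * ENNReal.ofReal (a x ^ 2 + b x ^ 2)) =
      ∫⁻ x, ENNReal.ofReal (V x * (a x ^ 2 + b x ^ 2) / ‖x‖) := by
    refine lintegral_congr fun x => ?_
    rw [← ENNReal.ofReal_mul (div_nonneg (S.hV0 x) (norm_nonneg x))]
    congr 1; ring
  have hZeq : (∫⁻ x, ENNReal.ofReal (a x ^ 2 + b x ^ 2) / ENNReal.ofReal (‖x‖^3)) =
      ∫⁻ x, ENNReal.ofReal ((a x ^ 2 + b x ^ 2) / ‖x‖ ^ 3) := by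
    refine lintegral_congr_ae ?_
    filter_upwards [ae_ne_zero S.hd] with x hx
    have : 0 < ‖x‖ := norm_pos_iff.2 hx
    rw [ENNReal.ofReal_div_of_pos (by positivity)]
  have hVle : nX2 (fun x => ENNReal.ofReal (V x) * ENNReal.ofReal (a x ^ 2 + b x ^ 2)) ≤
      ∫⁻ x, ENNReal.ofReal (V x * (a x ^ 2 + b x ^ 2) / ‖x‖) := by
    refine nX2_le_lintegral ?_
    filter_upwards [ae_ne_zero S.hd] with x hx
    have : 0 < ‖x‖ := norm_pos_iff.2 hx
    rw [← ENNReal.ofReal_mul (S.hV0 x), ← ENNReal.ofReal_mul (norm_nonneg x)]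
    refine ENNReal.ofReal_le_ofReal (le_of_eq ?_)
    field_simp
  have hSup : (⨆ (R : ℝ) (_ : 0 < R), (ENNReal.ofReal (R^3))⁻¹ *
      ∫⁻ x in ball (0 : Ed d) R, ENNReal.ofReal (a x ^ 2 + b x ^ 2)) ≤
      ∫⁻ x, ENNReal.ofReal ((a x ^ 2 + b x ^ 2) / ‖x‖ ^ 3) := by
    refine iSup₂_le fun R hR => ?_
    have hR3 : 0 < R ^ 3 := by positivity
    rw [ENNReal.inv_mul_le_iff (by simpa using hR3) ofReal_ne_top,
      ← lintegral_const_mul' _ _ ofReal_ne_top]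
    refine le_trans (setLIntegral_mono_ae' measurableSet_ball ?_) (setLIntegral_le_lintegral _ _)
    filter_upwards [ae_ne_zero S.hd] with x hx hb
    have hxp : 0 < ‖x‖ := norm_pos_iff.2 hx
    have hxR : ‖x‖ < R := by simpa using hb
    rw [← ENNReal.ofReal_mul hR3.le]
    refine ENNReal.ofReal_le_ofReal ?_
    rw [mul_div_assoc', le_div_iff₀ (by positivity), mul_comm]
    gcongr
  -- finiteness of the quantities to be absorbed
  have hDt : nX2 (fun x => ENNReal.ofReal (gr2 a x + gr2 b x)) ≠ ⊤ := by
    refine ne_top_of_le_ne_top S.int_g1.lintegral_lt_top.ne (nX2_le_lintegral ?_)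
    filter_upwards [ae_ne_zero S.hd] with x hx
    have : 0 < ‖x‖ := norm_pos_iff.2 hx
    rw [← ENNReal.ofReal_mul (norm_nonneg x)]
    refine ENNReal.ofReal_le_ofReal (le_of_eq ?_)
    field_simp
  have hUt : nX2 (fun x => ENNReal.ofReal (a x ^ 2 + b x ^ 2)) ≠ ⊤ := by
    refine ne_top_of_le_ne_top S.int_w1.lintegral_lt_top.ne (nX2_le_lintegral ?_)
    filter_upwards [ae_ne_zero S.hd] with x hx
    have : 0 < ‖x‖ := norm_pos_iff.2 hx
    rw [← ENNReal.ofReal_mul (norm_nonneg x)]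
    refine ENNReal.ofReal_le_ofReal (le_of_eq ?_)
    field_simp
  have hZt : ∫⁻ x, ENNReal.ofReal ((a x ^ 2 + b x ^ 2) / ‖x‖ ^ 3) ≠ ⊤ :=
    S.int_w3.lintegral_lt_top.ne
  by_cases hFt : (nXstar fun x => ENNReal.ofReal (f₁ x ^ 2 + f₂ x ^ 2)) = ⊤
  · rw [hFt, ENNReal.top_pow two_ne_zero, ENNReal.mul_top]
    · simp
    · simp only [ne_eq, ENNReal.ofReal_eq_zero, not_le]
      positivity
  have e2 : ∀ x, ENNReal.ofReal √(f₁ x ^ 2 + f₂ x ^ 2) ^ 2 = ENNReal.ofReal (f₁ x ^ 2 + f₂ x ^ 2) :=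
    fun x => ofReal_sqrt_sq (by positivity)
  have e3 : ∀ x, ENNReal.ofReal √(gr2 a x + gr2 b x) ^ 2 = ENNReal.ofReal (gr2 a x + gr2 b x) :=
    fun x => ofReal_sqrt_sq (hg0 x)
  have i1 := sq_le_of_le_mul_rpow (lintegral_mul_le_nX2 S.hd S.meas_f S.meas_g)
  simp_rw [e2, e3] at i1
  have i2 := sq_le_of_le_mul_rpow (lintegral_mul_le_nXstar S.hd S.meas_f S.meas_w1
    (M := ∫⁻ x, ENNReal.ofReal ((a x ^ 2 + b x ^ 2) / ‖x‖ ^ 3)) fun j => by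
      rw [← lintegral_const_mul' _ _ ofReal_ne_top]
      have hms : MeasurableSet (shell d j) :=
        (measurableSet_lt measurable_const measurable_norm).inter
          (measurableSet_le measurable_norm measurable_const)
      refine le_trans (setLIntegral_mono_ae' hms ?_) (setLIntegral_le_lintegral _ _)
      filter_upwards [ae_ne_zero S.hd] with x hx hb
      have hxp : 0 < ‖x‖ := norm_pos_iff.2 hx
      rw [← ENNReal.ofReal_mul (by positivity), ← ENNReal.ofReal_pow (by positivity), div_pow,
        Real.sq_sqrt (by positivity)]
      refine ENNReal.ofReal_le_ofReal ?_
      have hb2 := hb.2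
      calc (a x ^ 2 + b x ^ 2) / ‖x‖ ^ 2 = ‖x‖ * ((a x ^ 2 + b x ^ 2) / ‖x‖ ^ 3) := by field_simp
        _ ≤ _ := by gcongr)
  simp_rw [e2] at i2
  have key := absorb_ennreal (m := (d:ℝ) + 2) hk0 (by positivity : 0 < ((d:ℝ) - 1) / 2)
    (by linarith) hFt hDt (ENNReal.mul_ne_top ofReal_ne_top hUt) hZt
    (ENNReal.mul_ne_top (ofReal_ne_top (r := |e|)) hUt) m1 m2 m4 S.rhs_eq.le i1 i2 (S.cross_le he)
  rw [hWeq, hZeq, ENNReal.ofReal_mul (by norm_num : (0:ℝ) ≤ 1 / 2), mul_assoc (ENNReal.ofReal (1 / 2))]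
  refine le_trans ?_ key
  set T := ENNReal.ofReal k * ∫⁻ x, ENNReal.ofReal (rhs a b f₁ f₂ e x)
  calc _ ≤ T + T + T + T + T + ENNReal.ofReal ((d:ℝ) - 3) * T := by
        gcongr
        · exact hSup.trans m4
        · exact hVle.trans m3
    _ = (5 + ENNReal.ofReal ((d:ℝ) - 3)) * T := by ring
    _ = ENNReal.ofReal ((d:ℝ) + 2) * T := by
      congr 1
      rw [show (d:ℝ) + 2 = 5 + ((d:ℝ) - 3) by ring, ENNReal.ofReal_add (by norm_num) hd3.le]
      simp
end Sol

/-! ### Reduction to real and imaginary parts -/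

section
variable {d : ℕ}

lemma pr_re {u : Ed d → ℂ} {x : Ed d} (hu : DifferentiableAt ℝ u x) (i : Fin d) :
    pr (fun y => (u y).re) i x = (pd u i x).re := by
  have h := (Complex.reCLM.hasFDerivAt (x := u x)).comp x hu.hasFDerivAt
  have h' : HasFDerivAt (fun y => (u y).re) (Complex.reCLM.comp (fderiv ℝ u x)) x := h
  unfold pr
  rw [h'.fderiv]
  rfl

lemma pr_im {u : Ed d → ℂ} {x : Ed d} (hu : DifferentiableAt ℝ u x) (i : Fin d) :
    pr (fun y => (u y).im) i x = (pd u i x).im := by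
  have h := (Complex.imCLM.hasFDerivAt (x := u x)).comp x hu.hasFDerivAt
  have h' : HasFDerivAt (fun y => (u y).im) (Complex.imCLM.comp (fderiv ℝ u x)) x := h
  unfold pr
  rw [h'.fderiv]
  rfl

lemma differentiable_pd {u : Ed d → ℂ} (hu : ContDiff ℝ 2 u) (i : Fin d) :
    Differentiable ℝ (pd u i) :=
  ((hu.fderiv_right (m := 1) (by norm_num)).clm_apply contDiff_const).differentiable one_ne_zero

lemma lapR_re {u : Ed d → ℂ} (hu : ContDiff ℝ 2 u) (x : Ed d) :
    lapR (fun y => (u y).re) x = (lap u x).re := by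
  unfold lapR lap
  rw [Complex.re_sum]
  refine Finset.sum_congr rfl fun i _ => ?_
  rw [show pr (fun y => (u y).re) i = fun y => (pd u i y).re from
    funext fun y => pr_re (hu.differentiable two_ne_zero y) i, pr_re (differentiable_pd hu i x)]
  rfl

lemma lapR_im {u : Ed d → ℂ} (hu : ContDiff ℝ 2 u) (x : Ed d) :
    lapR (fun y => (u y).im) x = (lap u x).im := by
  unfold lapR lap
  rw [Complex.im_sum]
  refine Finset.sum_congr rfl fun i _ => ?_
  rw [show pr (fun y => (u y).im) i = fun y => (pd u i y).im from
    funext fun y => pr_im (hu.differentiable two_ne_zero y) i, pr_im (differentiable_pd hu i x)]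
  rfl

lemma nnnorm_sq_eq (z : ℂ) : (‖z‖₊ : ℝ≥0∞) ^ 2 = ENNReal.ofReal (z.re ^ 2 + z.im ^ 2) := by
  have h : z.re ^ 2 + z.im ^ 2 = ‖z‖ ^ 2 := by rw [Complex.sq_norm, Complex.normSq_apply]; ring
  rw [h, ENNReal.ofReal_pow (norm_nonneg z), ofReal_norm]
  rfl

lemma usq_eq (u : Ed d → ℂ) :
    usq u = fun x => ENNReal.ofReal ((u x).re ^ 2 + (u x).im ^ 2) :=
  funext fun x => nnnorm_sq_eq (u x)

lemma gradSq_eq {u : Ed d → ℂ} (hu : ContDiff ℝ 2 u) :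
    gradSq u = fun x => ENNReal.ofReal (gr2 (fun y => (u y).re) x + gr2 (fun y => (u y).im) x) := by
  funext x
  unfold gradSq gr2
  rw [← Finset.sum_add_distrib, ENNReal.ofReal_sum_of_nonneg fun i _ => by positivity]
  refine Finset.sum_congr rfl fun i _ => ?_
  rw [nnnorm_sq_eq, pr_re (hu.differentiable two_ne_zero x), pr_im (hu.differentiable two_ne_zero x)]

lemma integrable_of_lintegral_lt_top {h : Ed d → ℝ} (hm : AEStronglyMeasurable h)
    (h0 : ∀ x, 0 ≤ h x) (hi : ∫⁻ x, ENNReal.ofReal (h x) < ⊤) : Integrable h :=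
  ⟨hm, by rwa [hasFiniteIntegral_iff_ofReal (ae_of_all _ h0)]⟩
end

/-- intermediate a priori estimate (estimate (18) of the paper)
for the resolvent equation with a repulsive potential, d > 3, τ ≥ 0. -/
theorem stmt_4 (d : ℕ) (hd : 3 < d) (γ η : ℝ) (hγ : 0 < γ) (hη : 0 < η) :
    ∃ C : ℝ, 0 < C ∧
      ∀ (V : Ed d → ℝ), (∀ x, 0 ≤ V x) → ContDiffOn ℝ 1 V ({(0 : Ed d)}ᶜ) →
      (∀ x : Ed d, x ≠ 0 →
        γ * V x + ‖x‖ * radialDeriv V x ≤ (1 - η) * ((d:ℝ) - 1) * ((d:ℝ) - 3) / (2 * ‖x‖^2)) →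
      ∀ (ε τ : ℝ), ε ≠ 0 → 0 ≤ τ →
      ∀ (σ : ℝ), σ = 1 ∨ σ = -1 →
      ∀ (u f : Ed d → ℂ), ContDiff ℝ 2 u →
      (∫⁻ x, usq u x) < ⊤ → (∫⁻ x, gradSq u x) < ⊤ → (∫⁻ x, usq f x) < ⊤ →
      (∀ x, -lap u x + (V x : ℂ) * u x + (σ : ℂ) * ((ε : ℂ) * Complex.I) * u x
        - (τ : ℂ) * u x = f x) →
      nX2 (gradSq u)
        + ENNReal.ofReal τ * nX2 (usq u)
        + (∫⁻ x, ENNReal.ofReal (V x / ‖x‖) * usq u x)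
        + (⨆ (R : ℝ) (_ : 0 < R),
            (ENNReal.ofReal (R^3))⁻¹ * ∫⁻ x in ball (0 : Ed d) R, usq u x)
        + nX2 (fun x => ENNReal.ofReal (V x) * usq u x)
        + ENNReal.ofReal ((d:ℝ) - 3) * (∫⁻ x, usq u x / ENNReal.ofReal (‖x‖^3))
      ≤ ENNReal.ofReal C * (nXstar (usq f)) ^ 2
        + ENNReal.ofReal ((1/2) * |ε|) * nX2 (usq u) := by
  have hd' : (3:ℝ) < d := by exact_mod_cast hd
  have hd1 : (0:ℝ) < (d:ℝ) - 1 := by linarith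
  have hd3 : (0:ℝ) < (d:ℝ) - 3 := by linarith
  obtain ⟨δ, hδ, hδ1, hδγ, hδη⟩ : ∃ δ : ℝ, 0 < δ ∧ δ ≤ 1 ∧ δ ≤ γ / 2 ∧ δ ≤ η / 2 :=
    ⟨min 1 (min (γ / 2) (η / 2)), by positivity, min_le_left _ _,
      (min_le_right _ _).trans (min_le_left _ _), (min_le_right _ _).trans (min_le_right _ _)⟩
  obtain ⟨k, hk⟩ : ∃ k : ℝ, k = 6 / δ + 4 / γ + 8 / (η * ((d:ℝ) - 1) * ((d:ℝ) - 3)) := ⟨_, rfl⟩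
  have hk0 : 0 < k := by rw [hk]; positivity
  refine ⟨16 * k ^ 2 * ((d:ℝ) + 2) ^ 2 * (2 + ((d:ℝ) - 1) / 2) ^ 2, by positivity, ?_⟩
  intro V hV0 hV hVr ε τ hε hτ σ hσ u f hu hu2 hgu hf heq
  have hre : ContDiff ℝ 2 fun x => (u x).re := Complex.reCLM.contDiff.comp hu
  have him : ContDiff ℝ 2 fun x => (u x).im := Complex.imCLM.contDiff.comp hu
  have eq₁ : ∀ x, lapR (fun y => (u y).re) x =
      (V x - τ) * (u x).re - (σ * ε) * (u x).im - (f x).re := by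
    intro x
    have h := congrArg Complex.re (heq x)
    simp at h
    rw [lapR_re hu]
    linarith
  have eq₂ : ∀ x, lapR (fun y => (u y).im) x =
      (V x - τ) * (u x).im + (σ * ε) * (u x).re - (f x).im := by
    intro x
    have h := congrArg Complex.im (heq x)
    simp at h
    rw [lapR_im hu]
    linarith
  have hσε : |σ * ε| = |ε| := by rcases hσ with rfl | rfl <;> simp
  have hσε0 : σ * ε ≠ 0 := by rcases hσ with rfl | rfl <;> simpa using hε
  rw [usq_eq] at hu2 hf
  rw [gradSq_eq hu] at hgu
  have hfm : ContinuousOn f {(0 : Ed d)}ᶜ := by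
    have h1 : Continuous (lap u) :=
      continuous_finsetSum _ fun i _ => (((hu.fderiv_right (m := 1) (by norm_num)).clm_apply
        contDiff_const).continuous_fderiv one_ne_zero).clm_apply continuous_const
    have h2 := hV.continuousOn
    have h3 := hu.continuous
    rw [show f = _ from (funext heq).symm]
    fun_prop
  have S : Sol V (fun x => (u x).re) (fun x => (u x).im) (fun x => (f x).re) (fun x => (f x).im)
      (σ * ε) τ :=
    { hd := hd, hV0 := hV0, hV := hV, ha := hre, hb := him, eq₁ := eq₁, eq₂ := eq₂, hτ := hτ
      hw := integrable_of_lintegral_lt_top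
        ((hre.continuous.pow 2).add (him.continuous.pow 2)).aestronglyMeasurable
        (fun x => by positivity) hu2
      hg := integrable_of_lintegral_lt_top
        ((contDiff_gr2 hre).continuous.add (contDiff_gr2 him).continuous).aestronglyMeasurable
        (fun x => add_nonneg (gr2_nonneg _ _) (gr2_nonneg _ _)) hgu
      hf := integrable_of_lintegral_lt_top (aesm_of_continuousOn hd
        (((Complex.continuous_re.comp_continuousOn hfm).pow 2).add
          ((Complex.continuous_im.comp_continuousOn hfm).pow 2)))
        (fun x => by positivity) hf }
  have hest := S.estimate hσε0 hγ hη hδ hδ1 hδγ hδη hk fun x hx => by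
    have h := hVr x hx
    rwa [radialDeriv, mul_div_cancel₀ _ (norm_ne_zero_iff.2 hx), ← eul_eq] at h
  rw [hσε] at hest
  rw [usq_eq u, usq_eq f, gradSq_eq hu]
  exact hest
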